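/- arXiv:2402.07064 — 7 statements merged into one kernel-verified Lean document; each statement's English description precedes it below -/
import Mathlib

section
/- In the setting of the single-product Newsvendor moment problem (N) over Ω = [ω̲, ω̄] with mean and second-moment bounds γ_1, γ_2, assume (N) admits a minimizer, the interior point condition (γ_1, γ_2, 1) ∈ int{{(E_μ^Ω[ω], E_μ^Ω[ω²], E_μ^Ω[1]) : μ ⪰ 0} + ℝ_+² × {0}} holds, and max(N1) = min(N2), where (N2) is the SDP: minimize z¹ + z² over y¹, y² ∈ ℝ³ and z¹, z² ∈ ℝ subject to y_1¹ + y_1² ≤ γ_1, y_2¹ + y_2² ≤ γ_2, y_0¹ + y_0² = 1, x y_0¹ − y_1¹ ≤ z¹, 0 ≤ z², and for k=1,2: y_0^k F_0 + y_1^k F_1 ⪰ 0 and [[y_0^k, y_1^k],[y_1^k, y_2^k]] ⪰ 0. Let (ȳ^k, z̄^k) be a minimizer of (N2) with ȳ_0^k > 0 for k = 1,2, and set û^k = ȳ_1^k / ȳ_0^k. Then the measure ȳ_0¹ 𝟙_{û¹} + ȳ_0² 𝟙_{û²} is a minimizer of (N). -/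
open MeasureTheory Matrix
open scoped BigOperators

noncomputable section

/-- The value set of the Newsvendor moment problem (N). -/
def NewsVals (ωlo ωhi x γ1 γ2 : ℝ) : Set ℝ :=
  {val | ∃ μ : Measure ℝ, IsProbabilityMeasure μ ∧ μ (Set.Icc ωlo ωhi)ᶜ = 0 ∧
    (∫ ω, ω ∂μ) ≤ γ1 ∧ (∫ ω, ω ^ 2 ∂μ) ≤ γ2 ∧
    val = ∫ ω, min (x - ω) 0 ∂μ}

/-- The value set of the SDP (N1). -/
def NewsSDPVals (ωlo ωhi x γ1 γ2 : ℝ) : Set ℝ :=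
  {val | ∃ (lam1 lam2 lam3 : ℝ) (Z Z' : Matrix (Fin 2) (Fin 2) ℝ),
    0 ≤ lam1 ∧ 0 ≤ lam2 ∧ Z.PosSemidef ∧ Z'.PosSemidef ∧
    (!![x + lam3 - (Z * !![-ωlo, 0; 0, ωhi]).trace,
        (1 / 2) * (-1 + lam1 - (Z * !![(1:ℝ), 0; 0, -1]).trace);
        (1 / 2) * (-1 + lam1 - (Z * !![(1:ℝ), 0; 0, -1]).trace),
        lam2]).PosSemidef ∧
    (!![lam3 - (Z' * !![-ωlo, 0; 0, ωhi]).trace,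
        (1 / 2) * (lam1 - (Z' * !![(1:ℝ), 0; 0, -1]).trace);
        (1 / 2) * (lam1 - (Z' * !![(1:ℝ), 0; 0, -1]).trace),
        lam2]).PosSemidef ∧
    val = -lam1 * γ1 - lam2 * γ2 - lam3}

/-- Feasibility for the recovery SDP (N2). -/
def News2Feasible (ωlo ωhi x γ1 γ2 : ℝ) (y : Fin 2 → Fin 3 → ℝ)
    (z : Fin 2 → ℝ) : Prop :=
  y 0 1 + y 1 1 ≤ γ1 ∧ y 0 2 + y 1 2 ≤ γ2 ∧ y 0 0 + y 1 0 = 1 ∧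
  x * y 0 0 - y 0 1 ≤ z 0 ∧ 0 ≤ z 1 ∧
  (∀ k, ((y k 0) • !![-ωlo, 0; 0, ωhi] + (y k 1) • !![(1:ℝ), 0; 0, -1]).PosSemidef) ∧
  (∀ k, (!![y k 0, y k 1; y k 1, y k 2]).PosSemidef)

lemma news_psd_quad {a b c : ℝ} (h : (!![a, b; b, c]).PosSemidef) (t : ℝ) :
    0 ≤ a + 2 * b * t + c * t ^ 2 := by
  have := h.dotProduct_mulVec_nonneg ![1, t]
  simp [dotProduct, mulVec, Fin.sum_univ_two] at this
  nlinarith [this]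

lemma news_psd_det {a b c : ℝ} (h : (!![a, b; b, c]).PosSemidef) : b ^ 2 ≤ a * c := by
  have := h.det_nonneg
  rw [Matrix.det_fin_two_of] at this
  nlinarith [this]

lemma news_trace_nonneg {lo hi w : ℝ} {Z : Matrix (Fin 2) (Fin 2) ℝ} (hZ : Z.PosSemidef)
    (h1 : lo ≤ w) (h2 : w ≤ hi) :
    0 ≤ (Z * !![-lo, 0; 0, hi]).trace + w * (Z * !![(1:ℝ), 0; 0, -1]).trace := by
  have a := hZ.diag_nonneg (i := 0)
  have b := hZ.diag_nonneg (i := 1)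
  simp [Matrix.trace, Fin.sum_univ_two, Matrix.mul_apply]
  nlinarith [mul_nonneg a (sub_nonneg.2 h1), mul_nonneg b (sub_nonneg.2 h2)]

lemma news_integral (f : ℝ → ℝ) {a b u v : ℝ} (ha : 0 ≤ a) (hb : 0 ≤ b) :
    ∫ ω, f ω ∂(ENNReal.ofReal a • Measure.dirac u + ENNReal.ofReal b • Measure.dirac v)
      = a * f u + b * f v := by
  have hi : ∀ (c w : ℝ), Integrable f (ENNReal.ofReal c • Measure.dirac w) := fun c w =>
    (integrable_dirac (by simp)).smul_measure ENNReal.ofReal_ne_top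
  rw [integral_add_measure (hi _ _) (hi _ _), integral_smul_measure, integral_smul_measure]
  simp [ha, hb]

/-- Recovering an optimal probability measure for the
Newsvendor moment problem from a minimizer of the SDP (N2). -/
theorem newsvendor_recovery (ωlo ωhi x γ1 γ2 : ℝ)
    (h0 : 0 ≤ ωlo) (hlt : ωlo < ωhi)
    (hPmin : ∃ p, IsLeast (NewsVals ωlo ωhi x γ1 γ2) p)
    (hint : ((γ1, γ2, (1 : ℝ)) : ℝ × ℝ × ℝ) ∈ interior
      {q : ℝ × ℝ × ℝ | ∃ μ : Measure ℝ, IsFiniteMeasure μ ∧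
        μ (Set.Icc ωlo ωhi)ᶜ = 0 ∧ ∃ s1 s2 : ℝ, 0 ≤ s1 ∧ 0 ≤ s2 ∧
        q.1 = (∫ ω, ω ∂μ) + s1 ∧ q.2.1 = (∫ ω, ω ^ 2 ∂μ) + s2 ∧
        q.2.2 = (μ Set.univ).toReal})
    (ybar : Fin 2 → Fin 3 → ℝ) (zbar : Fin 2 → ℝ)
    (hfeas : News2Feasible ωlo ωhi x γ1 γ2 ybar zbar)
    (hminN2 : ∀ y z, News2Feasible ωlo ωhi x γ1 γ2 y z →
      zbar 0 + zbar 1 ≤ z 0 + z 1)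
    (hstrong : IsGreatest (NewsSDPVals ωlo ωhi x γ1 γ2) (zbar 0 + zbar 1))
    (hy0 : ∀ k, 0 < ybar k 0) :
    (IsProbabilityMeasure
        (ENNReal.ofReal (ybar 0 0) • Measure.dirac (ybar 0 1 / ybar 0 0)
          + ENNReal.ofReal (ybar 1 0) • Measure.dirac (ybar 1 1 / ybar 1 0)) ∧
      (ENNReal.ofReal (ybar 0 0) • Measure.dirac (ybar 0 1 / ybar 0 0)
          + ENNReal.ofReal (ybar 1 0) • Measure.dirac (ybar 1 1 / ybar 1 0))
        (Set.Icc ωlo ωhi)ᶜ = 0 ∧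
      (∫ ω, ω ∂(ENNReal.ofReal (ybar 0 0) • Measure.dirac (ybar 0 1 / ybar 0 0)
          + ENNReal.ofReal (ybar 1 0) • Measure.dirac (ybar 1 1 / ybar 1 0)))
        ≤ γ1 ∧
      (∫ ω, ω ^ 2 ∂(ENNReal.ofReal (ybar 0 0) • Measure.dirac (ybar 0 1 / ybar 0 0)
          + ENNReal.ofReal (ybar 1 0) • Measure.dirac (ybar 1 1 / ybar 1 0)))
        ≤ γ2) ∧
    ∀ val ∈ NewsVals ωlo ωhi x γ1 γ2,
      (∫ ω, min (x - ω) 0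
          ∂(ENNReal.ofReal (ybar 0 0) • Measure.dirac (ybar 0 1 / ybar 0 0)
            + ENNReal.ofReal (ybar 1 0) • Measure.dirac (ybar 1 1 / ybar 1 0)))
        ≤ val := by
  obtain ⟨f1, f2, f3, f4, f5, f6, f7⟩ := hfeas
  have hp0 := hy0 0
  have hp1 := hy0 1
  have hbox : ∀ k, ωlo ≤ ybar k 1 / ybar k 0 ∧ ybar k 1 / ybar k 0 ≤ ωhi := by
    intro k
    have a := (f6 k).diag_nonneg (i := 0)
    have b := (f6 k).diag_nonneg (i := 1)
    simp at a b
    rw [le_div_iff₀ (hy0 k), div_le_iff₀ (hy0 k)]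
    constructor <;> linarith
  have hsq : ∀ k, ybar k 0 * (ybar k 1 / ybar k 0) ^ 2 ≤ ybar k 2 := by
    intro k
    have a := news_psd_det (f7 k)
    have hk := hy0 k
    have e : ybar k 0 * (ybar k 1 / ybar k 0) ^ 2 = ybar k 1 ^ 2 / ybar k 0 := by
      field_simp
    rw [e, div_le_iff₀ hk]
    linarith
  have hm : ∀ k, ybar k 0 * (ybar k 1 / ybar k 0) = ybar k 1 := fun k =>
    mul_div_cancel₀ _ (hy0 k).ne'
  refine ⟨⟨⟨?_⟩, ?_, ?_, ?_⟩, ?_⟩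
  · simp only [Measure.add_apply, Measure.smul_apply, measure_univ, smul_eq_mul, mul_one]
    rw [← ENNReal.ofReal_add hp0.le hp1.le, f3, ENNReal.ofReal_one]
  · have := hbox 0
    have := hbox 1
    simp_all [Measure.add_apply, Measure.smul_apply]
  · rw [news_integral (fun ω => ω) hp0.le hp1.le, hm, hm]
    exact f1
  · rw [news_integral (fun ω => ω ^ 2) hp0.le hp1.le]
    linarith [hsq 0, hsq 1]
  · rintro val ⟨μ, hμ, hsupp, hμ1, hμ2, rfl⟩
    rw [news_integral (fun ω => min (x - ω) 0) hp0.le hp1.le]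
    obtain ⟨⟨l1, l2, l3, Z, Z', hl1, hl2, hZ, hZ', hA, hB, hval⟩, -⟩ := hstrong
    have hae : ∀ᵐ ω ∂μ, ω ∈ Set.Icc ωlo ωhi := hsupp
    have hint : ∀ g : ℝ → ℝ, Continuous g → Integrable g μ := by
      intro g hg
      obtain ⟨C, hC⟩ := (isCompact_Icc (a := ωlo) (b := ωhi)).exists_bound_of_continuousOn
        hg.continuousOn
      exact Integrable.of_bound hg.aestronglyMeasurable C (hae.mono fun ω hω => hC ω hω)
    have hle : ∫ ω, (-l3 - l1 * ω - l2 * ω ^ 2) ∂μ ≤ ∫ ω, min (x - ω) 0 ∂μ := by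
      refine integral_mono_ae (hint _ (by fun_prop)) (hint _ (by fun_prop)) (hae.mono ?_)
      intro ω hω
      have q1 := news_psd_quad hA ω
      have q2 := news_psd_quad hB ω
      have t1 := news_trace_nonneg hZ hω.1 hω.2
      have t2 := news_trace_nonneg hZ' hω.1 hω.2
      refine le_min ?_ ?_ <;> linarith
    have e : ∫ ω, (-l3 - l1 * ω - l2 * ω ^ 2) ∂μ
        = -l3 - l1 * ∫ ω, ω ∂μ - l2 * ∫ ω, ω ^ 2 ∂μ := by
      rw [integral_sub (hint _ (by fun_prop)) (hint _ (by fun_prop)),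
        integral_sub (hint _ (by fun_prop)) (hint _ (by fun_prop)),
        integral_const_mul, integral_const_mul]
      simp
    have b1 := mul_le_mul_of_nonneg_left hμ1 hl1
    have b2 := mul_le_mul_of_nonneg_left hμ2 hl2
    have c1 := mul_le_mul_of_nonneg_left (min_le_left (x - ybar 0 1 / ybar 0 0) 0) hp0.le
    have c2 := mul_le_mul_of_nonneg_left (min_le_right (x - ybar 1 1 / ybar 1 0) 0) hp1.le
    rw [mul_sub, hm] at c1
    linarith

end
end

section
/- Let Ω = [ω̲, ω̄] ⊂ ℝ with 0 ≤ ω̲ < ω̄, written as Ω = {v : F_0 + vF_1 ⪰ 0} with F_0 = diag(−ω̲, ω̄), F_1 = diag(1, −1), and fix x, γ_1, γ_2, γ_3 ∈ ℝ. Consider the moment problem (N′): minimize E_μ^Ω[min{x − ω, 0}] over probability measures μ on Ω subject to E_μ^Ω[ω] ≤ γ_1, E_μ^Ω[ω²] ≤ γ_2, and E_μ^Ω[ω⁴] ≤ γ_3. Consider the SDP (N3): maximize −λ_1γ_1 − λ_2γ_2 − λ_3γ_3 − λ_4 over λ ∈ ℝ_+³ × ℝ, 2×2 PSD matrices Z,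 Z′, and 3×3 PSD matrices Q, Q′ subject to tr(QB_0) = x + λ_4 − tr(ZF_0), tr(Q′B_0) = λ_4 − tr(Z′F_0), tr(QB_1) = −1 + λ_1 − tr(ZF_1), tr(Q′B_1) = λ_1 − tr(Z′F_1), tr(QB_2) = tr(Q′B_2) = λ_2, tr(QB_3) = tr(Q′B_3) = 0, tr(QB_4) = tr(Q′B_4) = λ_3, where B_0,…,B_4 are the 3×3 matrices with y(v)y(v)^T = Σ_{α=0}^4 B_α v^α for y(v) = (1, v, v²)^T. Assume (N′) admits a minimizer and (γ_1, γ_2, γ_3, 1) ∈ int{{(E_μ^Ω[ω], E_μ^Ω[ω²], E_μ^Ω[ω⁴], E_μ^Ω[1]) : μ a non-negative finite Borel measure on Ω} + ℝ_+³ × {0}}. Then min(N′) = max(N3). -/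
open MeasureTheory Matrix
open scoped BigOperators

noncomputable section

def B0 : Matrix (Fin 3) (Fin 3) ℝ := !![1, 0, 0; 0, 0, 0; 0, 0, 0]
def B1 : Matrix (Fin 3) (Fin 3) ℝ := !![0, 1, 0; 1, 0, 0; 0, 0, 0]
def B2 : Matrix (Fin 3) (Fin 3) ℝ := !![0, 0, 1; 0, 1, 0; 1, 0, 0]
def B3 : Matrix (Fin 3) (Fin 3) ℝ := !![0, 0, 0; 0, 0, 1; 0, 1, 0]
def B4 : Matrix (Fin 3) (Fin 3) ℝ := !![0, 0, 0; 0, 0, 0; 0, 0, 1]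

/-- The value set of the Newsvendor moment problem (N′) with mean, second- and
fourth-moment bounds. -/
def News4Vals (ωlo ωhi x γ1 γ2 γ3 : ℝ) : Set ℝ :=
  {val | ∃ μ : Measure ℝ, IsProbabilityMeasure μ ∧ μ (Set.Icc ωlo ωhi)ᶜ = 0 ∧
    (∫ ω, ω ∂μ) ≤ γ1 ∧ (∫ ω, ω ^ 2 ∂μ) ≤ γ2 ∧ (∫ ω, ω ^ 4 ∂μ) ≤ γ3 ∧
    val = ∫ ω, min (x - ω) 0 ∂μ}

/-- The value set of the SDP (N3). -/
def News4SDPVals (ωlo ωhi x γ1 γ2 γ3 : ℝ) : Set ℝ :=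
  {val | ∃ (lam1 lam2 lam3 lam4 : ℝ) (Z Z' : Matrix (Fin 2) (Fin 2) ℝ)
      (Q Q' : Matrix (Fin 3) (Fin 3) ℝ),
    0 ≤ lam1 ∧ 0 ≤ lam2 ∧ 0 ≤ lam3 ∧
    Z.PosSemidef ∧ Z'.PosSemidef ∧ Q.PosSemidef ∧ Q'.PosSemidef ∧
    (Q * B0).trace = x + lam4 - (Z * !![-ωlo, 0; 0, ωhi]).trace ∧
    (Q' * B0).trace = lam4 - (Z' * !![-ωlo, 0; 0, ωhi]).trace ∧
    (Q * B1).trace = -1 + lam1 - (Z * !![(1:ℝ), 0; 0, -1]).trace ∧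
    (Q' * B1).trace = lam1 - (Z' * !![(1:ℝ), 0; 0, -1]).trace ∧
    (Q * B2).trace = lam2 ∧ (Q' * B2).trace = lam2 ∧
    (Q * B3).trace = 0 ∧ (Q' * B3).trace = 0 ∧
    (Q * B4).trace = lam3 ∧ (Q' * B4).trace = lam3 ∧
    val = -lam1 * γ1 - lam2 * γ2 - lam3 * γ3 - lam4}

/-- First-order condition helper. -/
lemma nv_slope {s δ K : ℝ} (hδ : 0 < δ)
    (h : ∀ t, 0 < t → t ≤ δ → s * t ≤ t ^ 2 * K) : s ≤ 0 := by
  by_contra hs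
  push Not at hs
  have hK : 0 < |K| + 1 := by positivity
  set t := min δ (s / (2 * (|K| + 1))) with ht
  have ht0 : 0 < t := lt_min hδ (by positivity)
  have h1 := h t ht0 (min_le_left _ _)
  have h2 : t * (2 * (|K| + 1)) ≤ s := by
    rw [← le_div_iff₀ (by positivity)]
    exact min_le_right _ _
  have h3 : s ≤ t * K := by
    have : t * s ≤ t * (t * K) := by nlinarith
    exact le_of_mul_le_mul_left this ht0
  have h4 : t * K ≤ t * |K| := mul_le_mul_of_nonneg_left (le_abs_self K) ht0.le
  have h5 : 0 ≤ t * |K| := by positivity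
  nlinarith

/-- Convex quartics non-negative on an interval have the required SDP certificate. -/
lemma nv_cert {lo hi a b c d : ℝ} (h0 : 0 ≤ lo) (hlt : lo < hi) (hc : 0 ≤ c) (hd : 0 ≤ d)
    (hP : ∀ v ∈ Set.Icc lo hi, 0 ≤ a + b * v + c * v ^ 2 + d * v ^ 4) :
    ∃ (Z : Matrix (Fin 2) (Fin 2) ℝ) (Q : Matrix (Fin 3) (Fin 3) ℝ),
      Z.PosSemidef ∧ Q.PosSemidef ∧
      (Q * B0).trace = a - (Z * !![-lo, 0; 0, hi]).trace ∧
      (Q * B1).trace = b - (Z * !![(1:ℝ), 0; 0, -1]).trace ∧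
      (Q * B2).trace = c ∧ (Q * B3).trace = 0 ∧ (Q * B4).trace = d := by
  obtain ⟨m, hm, hmin⟩ := (isCompact_Icc (a := lo) (b := hi)).exists_isMinOn
    (Set.nonempty_Icc.2 hlt.le)
    (f := fun v : ℝ => a + b * v + c * v ^ 2 + d * v ^ 4) (by fun_prop)
  have hk := hP m hm
  have hmin' : ∀ v ∈ Set.Icc lo hi, a + b * m + c * m ^ 2 + d * m ^ 4
      ≤ a + b * v + c * v ^ 2 + d * v ^ 4 := fun v hv => hmin hv
  set s := b + 2 * c * m + 4 * d * m ^ 3 with hs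
  have hm0 : 0 ≤ m := h0.trans hm.1
  have hhi : 0 ≤ hi := h0.trans hlt.le
  have key : ∀ v ∈ Set.Icc lo hi, -(s * (v - m)) ≤ (v - m) ^ 2 * (c + d * (6 * hi ^ 2)) := by
    intro v hv
    have h1 := hmin' v hv
    have hv0 : 0 ≤ v := h0.trans hv.1
    have e : a + b * v + c * v ^ 2 + d * v ^ 4 - (a + b * m + c * m ^ 2 + d * m ^ 4)
        = s * (v - m) + (v - m) ^ 2 * (c + d * (v ^ 2 + 2 * m * v + 3 * m ^ 2)) := by
      rw [hs]; ring
    have h2 : v ^ 2 + 2 * m * v + 3 * m ^ 2 ≤ 6 * hi ^ 2 := by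
      have := hv.2; have := hm.2
      have e1 : v ^ 2 ≤ hi ^ 2 := by gcongr
      have e2 : m ^ 2 ≤ hi ^ 2 := by gcongr
      nlinarith [sq_nonneg (v - m)]
    have h3 : (v - m) ^ 2 * (c + d * (v ^ 2 + 2 * m * v + 3 * m ^ 2))
      ≤ (v - m) ^ 2 * (c + d * (6 * hi ^ 2)) := by gcongr
    linarith
  have hz1 : max s 0 * (m - lo) = 0 := by
    rcases eq_or_lt_of_le hm.1 with h | h
    · rw [← h]; ring
    · have : s ≤ 0 := by
        apply nv_slope (sub_pos.2 h) (K := c + d * (6 * hi ^ 2))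
        intro t ht ht'
        have := key (m - t) ⟨by linarith, by linarith [hm.2]⟩
        have e : m - t - m = -t := by ring
        rw [e] at this
        linarith [this, neg_sq t, show (-t) ^ 2 * (c + d * (6 * hi ^ 2)) =
          t ^ 2 * (c + d * (6 * hi ^ 2)) by ring]
      rw [max_eq_right this]; ring
  have hz2 : max (-s) 0 * (hi - m) = 0 := by
    rcases eq_or_lt_of_le hm.2 with h | h
    · rw [h]; ring
    · have : -s ≤ 0 := by
        apply nv_slope (sub_pos.2 h) (K := c + d * (6 * hi ^ 2))
        intro t ht ht'
        have := key (m + t) ⟨by linarith [hm.1], by linarith⟩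
        have e : m + t - m = t := by ring
        rw [e] at this
        linarith
      rw [max_eq_right this]; ring
  have hz12 : max s 0 - max (-s) 0 = s := by
    rcases le_total s 0 with h | h
    · rw [max_eq_right h, max_eq_left (by linarith)]; ring
    · rw [max_eq_left h, max_eq_right (by linarith)]; ring
  have hz1n : 0 ≤ max s 0 := le_max_right _ _
  have hz2n : 0 ≤ max (-s) 0 := le_max_right _ _
  generalize max s 0 = z1 at *
  generalize max (-s) 0 = z2 at *
  refine ⟨Matrix.diagonal ![z1, z2],
    (a + b * m + c * m ^ 2 + d * m ^ 4) • Matrix.vecMulVec ![1, 0, 0] (star ![1, 0, 0])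
    + (c + 2 * d * m ^ 2) • Matrix.vecMulVec ![-m, 1, 0] (star ![-m, 1, 0])
    + d • Matrix.vecMulVec ![-m ^ 2, 0, 1] (star ![-m ^ 2, 0, 1]), ?_, ?_, ?_, ?_, ?_, ?_, ?_⟩
  · apply Matrix.PosSemidef.diagonal
    intro i
    fin_cases i <;> simpa
  · refine (Matrix.PosSemidef.add (Matrix.PosSemidef.add ?_ ?_) ?_)
    · exact (Matrix.posSemidef_vecMulVec_self_star _).smul hk
    · exact (Matrix.posSemidef_vecMulVec_self_star _).smul (by positivity)
    · exact (Matrix.posSemidef_vecMulVec_self_star _).smul hd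
  · simp [Matrix.trace, Fin.sum_univ_succ, Matrix.mul_apply, B0]
    linear_combination hz1 + hz2 + m * (hs - hz12)
  · simp [Matrix.trace, Fin.sum_univ_succ, Matrix.mul_apply, B1]
    linear_combination (hz12 - hs)
  · simp [Matrix.trace, Fin.sum_univ_succ, Matrix.mul_apply, B2]
    ring
  · simp [Matrix.trace, Fin.sum_univ_succ, Matrix.mul_apply, B3]
  · simp [Matrix.trace, Fin.sum_univ_succ, Matrix.mul_apply, B4]

/-- A certificate implies non-negativity on the interval. -/
lemma nv_cert_nonneg {lo hi a b c d : ℝ}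
    {Z : Matrix (Fin 2) (Fin 2) ℝ} {Q : Matrix (Fin 3) (Fin 3) ℝ}
    (hZ : Z.PosSemidef) (hQ : Q.PosSemidef)
    (e0 : (Q * B0).trace = a - (Z * !![-lo, 0; 0, hi]).trace)
    (e1 : (Q * B1).trace = b - (Z * !![(1:ℝ), 0; 0, -1]).trace)
    (e2 : (Q * B2).trace = c) (e3 : (Q * B3).trace = 0) (e4 : (Q * B4).trace = d)
    {v : ℝ} (hv : v ∈ Set.Icc lo hi) : 0 ≤ a + b * v + c * v ^ 2 + d * v ^ 4 := by
  have hq := hQ.dotProduct_mulVec_nonneg ![1, v, v ^ 2]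
  have hz0 := hZ.diag_nonneg (i := 0)
  have hz1 := hZ.diag_nonneg (i := 1)
  simp [Matrix.trace, Fin.sum_univ_succ, Matrix.mul_apply, B0, B1, B2, B3, B4,
    dotProduct, Matrix.mulVec] at hq e0 e1 e2 e3 e4
  have k0 := mul_nonneg hz0 (sub_nonneg.2 hv.1)
  have k1 := mul_nonneg hz1 (sub_nonneg.2 hv.2)
  refine (add_nonneg (add_nonneg hq k0) k1).trans_eq ?_
  linear_combination e0 + v * e1 + v ^ 2 * e2 + v ^ 3 * e3 + v ^ 4 * e4

lemma nv_integrable {lo hi : ℝ} {μ : Measure ℝ} [IsFiniteMeasure μ]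
    (hμ : μ (Set.Icc lo hi)ᶜ = 0) {f : ℝ → ℝ} (hf : Continuous f) : Integrable f μ := by
  have h : μ.restrict (Set.Icc lo hi) = μ :=
    Measure.restrict_eq_self_of_ae_mem (by rwa [ae_iff])
  rw [← h]
  exact hf.continuousOn.integrableOn_compact isCompact_Icc

/-- The epigraph cone of the moment problem. -/
def nvCone (lo hi x : ℝ) : Set (ℝ × ℝ × ℝ × ℝ × ℝ) :=
  {q | ∃ μ : Measure ℝ, IsFiniteMeasure μ ∧ μ (Set.Icc lo hi)ᶜ = 0 ∧
    (∫ ω, ω ∂μ) ≤ q.1 ∧ (∫ ω, ω ^ 2 ∂μ) ≤ q.2.1 ∧ (∫ ω, ω ^ 4 ∂μ) ≤ q.2.2.1 ∧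
    (μ Set.univ).toReal = q.2.2.2.1 ∧ (∫ ω, min (x - ω) 0 ∂μ) ≤ q.2.2.2.2}

lemma nvCone_comb {lo hi x : ℝ} {q r : ℝ × ℝ × ℝ × ℝ × ℝ} (hq : q ∈ nvCone lo hi x)
    (hr : r ∈ nvCone lo hi x) {a b : ℝ} (ha : 0 ≤ a) (hb : 0 ≤ b) :
    a • q + b • r ∈ nvCone lo hi x := by
  obtain ⟨μ, i1, h1, q1, q2, q3, q4, q5⟩ := hq
  obtain ⟨ν, i2, h2, r1, r2, r3, r4, r5⟩ := hr
  have hI : ∀ f : ℝ → ℝ, Continuous f →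
      ∫ ω, f ω ∂(a.toNNReal • μ + b.toNNReal • ν) = a * ∫ ω, f ω ∂μ + b * ∫ ω, f ω ∂ν := by
    intro f hf
    rw [integral_add_measure, integral_smul_nnreal_measure, integral_smul_nnreal_measure]
    · simp [NNReal.smul_def, ha, hb]
    · exact nv_integrable (lo := lo) (hi := hi) (by simp [h1]) hf
    · exact nv_integrable (lo := lo) (hi := hi) (by simp [h2]) hf
  have hu := hI (fun _ => 1) continuous_const
  simp only [integral_const, smul_eq_mul, mul_one, Measure.real] at hu
  refine ⟨a.toNNReal • μ + b.toNNReal • ν, inferInstance, by simp [h1, h2], ?_, ?_, ?_, ?_, ?_⟩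
  · rw [hI (fun ω => ω) (by fun_prop)]
    simp only [Prod.fst_add, Prod.smul_fst, smul_eq_mul]
    gcongr
  · rw [hI (fun ω => ω ^ 2) (by fun_prop)]
    simp only [Prod.fst_add, Prod.smul_fst, Prod.snd_add, Prod.smul_snd, smul_eq_mul]
    gcongr
  · rw [hI (fun ω => ω ^ 4) (by fun_prop)]
    simp only [Prod.fst_add, Prod.smul_fst, Prod.snd_add, Prod.smul_snd, smul_eq_mul]
    gcongr
  · rw [hu, q4, r4]; simp
  · rw [hI (fun ω => min (x - ω) 0) (by fun_prop)]
    simp only [Prod.snd_add, Prod.smul_snd, smul_eq_mul]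
    gcongr

lemma nvCone_dirac {lo hi x v : ℝ} (hv : v ∈ Set.Icc lo hi) :
    (v, v ^ 2, v ^ 4, 1, min (x - v) 0) ∈ nvCone lo hi x := by
  refine ⟨Measure.dirac v, inferInstance, ?_, ?_, ?_, ?_, ?_, ?_⟩
  · rw [Measure.dirac_apply' _ measurableSet_Icc.compl]
    simp [hv.1, hv.2]
  all_goals simp

/-- Existence of an optimal dual multiplier. -/
lemma nv_dual (ωlo ωhi x γ1 γ2 γ3 : ℝ)
    (hint : ((γ1, γ2, γ3, (1 : ℝ)) : ℝ × ℝ × ℝ × ℝ) ∈ interior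
      {q : ℝ × ℝ × ℝ × ℝ | ∃ μ : Measure ℝ, IsFiniteMeasure μ ∧
        μ (Set.Icc ωlo ωhi)ᶜ = 0 ∧ ∃ s1 s2 s3 : ℝ, 0 ≤ s1 ∧ 0 ≤ s2 ∧ 0 ≤ s3 ∧
        q.1 = (∫ ω, ω ∂μ) + s1 ∧ q.2.1 = (∫ ω, ω ^ 2 ∂μ) + s2 ∧
        q.2.2.1 = (∫ ω, ω ^ 4 ∂μ) + s3 ∧ q.2.2.2 = (μ Set.univ).toReal})
    (p : ℝ) (hmin : IsLeast (News4Vals ωlo ωhi x γ1 γ2 γ3) p) :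
    ∃ l1 l2 l3 l4 : ℝ, 0 ≤ l1 ∧ 0 ≤ l2 ∧ 0 ≤ l3 ∧ p = -l1 * γ1 - l2 * γ2 - l3 * γ3 - l4 ∧
      ∀ v ∈ Set.Icc ωlo ωhi, 0 ≤ min (x - v) 0 + l4 + l1 * v + l2 * v ^ 2 + l3 * v ^ 4 := by
  set M := {q : ℝ × ℝ × ℝ × ℝ | ∃ μ : Measure ℝ, IsFiniteMeasure μ ∧
        μ (Set.Icc ωlo ωhi)ᶜ = 0 ∧ ∃ s1 s2 s3 : ℝ, 0 ≤ s1 ∧ 0 ≤ s2 ∧ 0 ≤ s3 ∧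
        q.1 = (∫ ω, ω ∂μ) + s1 ∧ q.2.1 = (∫ ω, ω ^ 2 ∂μ) + s2 ∧
        q.2.2.1 = (∫ ω, ω ^ 4 ∂μ) + s3 ∧ q.2.2.2 = (μ Set.univ).toReal} with hM
  have hMA : ∀ q1 q2 q3 q4 r : ℝ, (q1, q2, q3, q4) ∈ M → 0 ≤ r →
      (q1, q2, q3, q4, r) ∈ nvCone ωlo ωhi x := by
    rintro q1 q2 q3 q4 r ⟨μ, i, h, s1, s2, s3, p1, p2, p3, e1, e2, e3, e4⟩ hr
    dsimp only at e1 e2 e3 e4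
    refine ⟨μ, i, h, by dsimp only; linarith, by dsimp only; linarith, by dsimp only; linarith,
      e4.symm, le_trans ?_ hr⟩
    exact integral_nonpos fun ω => min_le_right _ _
  have hconv : Convex ℝ (nvCone ωlo ωhi x) := fun q hq r hr a b ha hb _ =>
    nvCone_comb hq hr ha hb
  have hne : (interior (nvCone ωlo ωhi x)).Nonempty := by
    refine ⟨(γ1, γ2, γ3, 1, 1), ?_⟩
    rw [mem_interior]
    refine ⟨{q | (q.1, q.2.1, q.2.2.1, q.2.2.2.1) ∈ interior M} ∩ {q | 0 < q.2.2.2.2},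
      ?_, ?_, ⟨hint, by simp⟩⟩
    · rintro ⟨q1, q2, q3, q4, r⟩ ⟨h1, h2⟩
      exact hMA _ _ _ _ _ (interior_subset h1) (le_of_lt h2)
    · apply IsOpen.inter
      · exact isOpen_interior.preimage (by fun_prop)
      · exact isOpen_lt (by fun_prop) (by fun_prop)
  have hpt : (γ1, γ2, γ3, 1, p) ∉ interior (nvCone ωlo ωhi x) := by
    intro hp
    have hc : Continuous fun t : ℝ => ((γ1, γ2, γ3, 1, p - t) : ℝ × ℝ × ℝ × ℝ × ℝ) := by
      fun_prop
    have h1 : ∀ᶠ t in nhds (0:ℝ), ((γ1, γ2, γ3, 1, p - t) : ℝ × ℝ × ℝ × ℝ × ℝ) ∈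
        nvCone ωlo ωhi x := by
      apply hc.tendsto 0
      simpa using mem_interior_iff_mem_nhds.1 hp
    obtain ⟨ε, hε, h2⟩ := Metric.eventually_nhds_iff.1 h1
    obtain ⟨μ, i, h, a1, a2, a3, a4, a5⟩ := h2 (y := ε / 2) (by
      simp [abs_of_pos hε]; linarith)
    dsimp only at a1 a2 a3 a4 a5
    have hprob : IsProbabilityMeasure μ := ⟨by
      rw [← ENNReal.toReal_eq_one_iff]; exact a4⟩
    have := hmin.2 ⟨μ, hprob, h, a1, a2, a3, rfl⟩
    linarith
  obtain ⟨f, hf0, hf⟩ := geometric_hahn_banach_of_nonempty_interior_point hconv hpt hne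
  obtain ⟨a1, a2, a3, a4, a0, hrep⟩ : ∃ a1 a2 a3 a4 a0 : ℝ, ∀ q1 q2 q3 q4 r : ℝ,
      f (q1, q2, q3, q4, r) = -(a1 * q1 + a2 * q2 + a3 * q3 + a4 * q4 + a0 * r) := by
    refine ⟨-f (1, 0, 0, 0, 0), -f (0, 1, 0, 0, 0), -f (0, 0, 1, 0, 0), -f (0, 0, 0, 1, 0),
      -f (0, 0, 0, 0, 1), fun q1 q2 q3 q4 r => ?_⟩
    have : ((q1, q2, q3, q4, r) : ℝ × ℝ × ℝ × ℝ × ℝ) = q1 • (1, 0, 0, 0, 0) +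
      q2 • (0, 1, 0, 0, 0) + q3 • (0, 0, 1, 0, 0) + q4 • (0, 0, 0, 1, 0)
      + r • (0, 0, 0, 0, 1) := by simp
    rw [this]
    simp only [map_add, map_smul, smul_eq_mul]
    ring
  have hA : ∀ q1 q2 q3 q4 r : ℝ, (q1, q2, q3, q4, r) ∈ nvCone ωlo ωhi x →
      a1 * γ1 + a2 * γ2 + a3 * γ3 + a4 * 1 + a0 * p ≤
        a1 * q1 + a2 * q2 + a3 * q3 + a4 * q4 + a0 * r := by
    intro q1 q2 q3 q4 r hq
    have := hf _ hq
    rw [hrep, hrep] at this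
    linarith
  -- monotone directions
  obtain ⟨μ, i, h, b1, b2, b3, b4⟩ := hmin.1
  have hup : ∀ s1 s2 s3 s0 : ℝ, 0 ≤ s1 → 0 ≤ s2 → 0 ≤ s3 → 0 ≤ s0 →
      (γ1 + s1, γ2 + s2, γ3 + s3, 1, p + s0) ∈ nvCone ωlo ωhi x := by
    intro s1 s2 s3 s0 h1 h2 h3 h4
    exact ⟨μ, inferInstance, h, by dsimp only; linarith, by dsimp only; linarith,
      by dsimp only; linarith, by simp, by dsimp only; linarith⟩
  have ha1 : 0 ≤ a1 := by
    have := hA _ _ _ _ _ (hup 1 0 0 0 (by norm_num) le_rfl le_rfl le_rfl); linarith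
  have ha2 : 0 ≤ a2 := by
    have := hA _ _ _ _ _ (hup 0 1 0 0 le_rfl (by norm_num) le_rfl le_rfl); linarith
  have ha3 : 0 ≤ a3 := by
    have := hA _ _ _ _ _ (hup 0 0 1 0 le_rfl le_rfl (by norm_num) le_rfl); linarith
  have ha0 : 0 ≤ a0 := by
    have := hA _ _ _ _ _ (hup 0 0 0 1 le_rfl le_rfl le_rfl (by norm_num)); linarith
  have hbase := hup 0 0 0 0 le_rfl le_rfl le_rfl le_rfl
  have hzero : a1 * γ1 + a2 * γ2 + a3 * γ3 + a4 * 1 + a0 * p = 0 := by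
    have k0 := nvCone_comb hbase hbase (a := 0) (b := 0) le_rfl le_rfl
    have k2 := nvCone_comb hbase hbase (a := 1) (b := 1) zero_le_one zero_le_one
    simp only [Prod.smul_mk, Prod.mk_add_mk, smul_eq_mul] at k0 k2
    have := hA _ _ _ _ _ k0
    have := hA _ _ _ _ _ k2
    linarith
  have ha0' : 0 < a0 := by
    refine lt_of_le_of_ne ha0 fun hz => hf0 ?_
    have hc : Continuous fun t : ℝ =>
      ((γ1 - t * a1, γ2 - t * a2, γ3 - t * a3, 1 - t * a4) : ℝ × ℝ × ℝ × ℝ) := by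
      fun_prop
    have h1 : ∀ᶠ t in nhds (0:ℝ),
      ((γ1 - t * a1, γ2 - t * a2, γ3 - t * a3, 1 - t * a4) : ℝ × ℝ × ℝ × ℝ) ∈ M := by
      apply hc.tendsto 0
      simpa using mem_interior_iff_mem_nhds.1 hint
    obtain ⟨ε, hε, h2⟩ := Metric.eventually_nhds_iff.1 h1
    have h3 := hA _ _ _ _ _ (hMA _ _ _ _ 0 (h2 (y := ε / 2) (by
      simp [abs_of_pos hε]; linarith)) le_rfl)
    rw [← hz] at h3
    have h4 : ε / 2 * (a1 ^ 2 + a2 ^ 2 + a3 ^ 2 + a4 ^ 2) ≤ 0 := by nlinarith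
    have h5 : a1 ^ 2 + a2 ^ 2 + a3 ^ 2 + a4 ^ 2 ≤ 0 := by
      by_contra hcon
      push Not at hcon
      have : 0 < ε / 2 * (a1 ^ 2 + a2 ^ 2 + a3 ^ 2 + a4 ^ 2) := by positivity
      linarith
    have e1 : a1 = 0 := by
      apply pow_eq_zero_iff (two_ne_zero) |>.1; nlinarith [sq_nonneg a1, sq_nonneg a2, sq_nonneg a3, sq_nonneg a4]
    have e2 : a2 = 0 := by
      apply pow_eq_zero_iff (two_ne_zero) |>.1; nlinarith [sq_nonneg a1, sq_nonneg a2, sq_nonneg a3, sq_nonneg a4]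
    have e3 : a3 = 0 := by
      apply pow_eq_zero_iff (two_ne_zero) |>.1; nlinarith [sq_nonneg a1, sq_nonneg a2, sq_nonneg a3, sq_nonneg a4]
    have e4 : a4 = 0 := by
      apply pow_eq_zero_iff (two_ne_zero) |>.1; nlinarith [sq_nonneg a1, sq_nonneg a2, sq_nonneg a3, sq_nonneg a4]
    apply ContinuousLinearMap.ext
    rintro ⟨q1, q2, q3, q4, r⟩
    rw [hrep, e1, e2, e3, e4, ← hz]
    simp
  refine ⟨a1 / a0, a2 / a0, a3 / a0, a4 / a0, by positivity, by positivity, by positivity, ?_, ?_⟩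
  · field_simp
    linarith
  · intro v hv
    have h1 := hA _ _ _ _ _ (nvCone_dirac (x := x) hv)
    rw [hzero] at h1
    have : min (x - v) 0 + a4 / a0 + a1 / a0 * v + a2 / a0 * v ^ 2 + a3 / a0 * v ^ 4 =
      (a1 * v + a2 * v ^ 2 + a3 * v ^ 4 + a4 * 1 + a0 * min (x - v) 0) / a0 := by
      field_simp
      ring
    rw [this]
    exact div_nonneg h1 ha0

/-- Exact SDP reformulation of the Newsvendor moment problem
with mean, second- and fourth-order moment bounds: `min (N′) = max (N3)`. -/
theorem newsvendor_fourth_moment_sdp_duality (ωlo ωhi x γ1 γ2 γ3 : ℝ)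
    (h0 : 0 ≤ ωlo) (hlt : ωlo < ωhi)
    (hint : ((γ1, γ2, γ3, (1 : ℝ)) : ℝ × ℝ × ℝ × ℝ) ∈ interior
      {q : ℝ × ℝ × ℝ × ℝ | ∃ μ : Measure ℝ, IsFiniteMeasure μ ∧
        μ (Set.Icc ωlo ωhi)ᶜ = 0 ∧ ∃ s1 s2 s3 : ℝ, 0 ≤ s1 ∧ 0 ≤ s2 ∧ 0 ≤ s3 ∧
        q.1 = (∫ ω, ω ∂μ) + s1 ∧ q.2.1 = (∫ ω, ω ^ 2 ∂μ) + s2 ∧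
        q.2.2.1 = (∫ ω, ω ^ 4 ∂μ) + s3 ∧ q.2.2.2 = (μ Set.univ).toReal})
    (p : ℝ) (hmin : IsLeast (News4Vals ωlo ωhi x γ1 γ2 γ3) p) :
    IsGreatest (News4SDPVals ωlo ωhi x γ1 γ2 γ3) p := by
  constructor
  · obtain ⟨l1, l2, l3, l4, h1, h2, h3, hp, hv⟩ := nv_dual ωlo ωhi x γ1 γ2 γ3 hint p hmin
    obtain ⟨Z, Q, hZ, hQ, e0, e1, e2, e3, e4⟩ := nv_cert (a := x + l4) (b := -1 + l1) h0 hlt h2 h3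
      (fun v hv' => by
        have := hv v hv'
        have := min_le_left (x - v) 0
        linarith)
    obtain ⟨Z', Q', hZ', hQ', e0', e1', e2', e3', e4'⟩ := nv_cert (a := l4) (b := l1) h0 hlt h2 h3
      (fun v hv' => by
        have := hv v hv'
        have := min_le_right (x - v) 0
        linarith)
    exact ⟨l1, l2, l3, l4, Z, Z', Q, Q', h1, h2, h3, hZ, hZ', hQ, hQ', e0, e0', e1, e1',
      e2, e2', e3, e3', e4, e4', hp⟩
  · rintro val ⟨l1, l2, l3, l4, Z, Z', Q, Q', h1, h2, h3, hZ, hZ', hQ, hQ', e0, e0', e1, e1',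
      e2, e2', e3, e3', e4, e4', rfl⟩
    obtain ⟨μ, i, h, b1, b2, b3, rfl⟩ := hmin.1
    have hle : ∀ v ∈ Set.Icc ωlo ωhi,
        -l4 - l1 * v - l2 * v ^ 2 - l3 * v ^ 4 ≤ min (x - v) 0 := by
      intro v hv
      have k1 := nv_cert_nonneg hZ hQ e0 e1 e2 e3 e4 hv
      have k2 := nv_cert_nonneg hZ' hQ' e0' e1' e2' e3' e4' hv
      exact le_min (by linarith) (by linarith)
    have hint' : ∫ v, (-l4 - l1 * v - l2 * v ^ 2 - l3 * v ^ 4) ∂μ ≤ ∫ v, min (x - v) 0 ∂μ := by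
      apply integral_mono_ae
      · exact nv_integrable h (by fun_prop)
      · exact nv_integrable h (by fun_prop)
      · have : ∀ᵐ v ∂μ, v ∈ Set.Icc ωlo ωhi := by rwa [ae_iff]
        filter_upwards [this] with v hv using hle v hv
    have e : ∫ v, (-l4 - l1 * v - l2 * v ^ 2 - l3 * v ^ 4) ∂μ =
        -l4 - l1 * (∫ v, v ∂μ) - l2 * (∫ v, v ^ 2 ∂μ) - l3 * (∫ v, v ^ 4 ∂μ) := by
      rw [integral_sub (nv_integrable h (by fun_prop)) (nv_integrable h (by fun_prop)),
        integral_sub (nv_integrable h (by fun_prop)) (nv_integrable h (by fun_prop)),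
        integral_sub (nv_integrable h (by fun_prop)) (nv_integrable h (by fun_prop)),
        integral_const_mul, integral_const_mul, integral_const_mul]
      simp
    rw [e] at hint'
    have := mul_le_mul_of_nonneg_left b1 h1
    have := mul_le_mul_of_nonneg_left b2 h2
    have := mul_le_mul_of_nonneg_left b3 h3
    linarith

end
end

section
/- In the setting of the Newsvendor moment problem (N′) over Ω = [ω̲, ω̄] with moment bounds γ_1, γ_2, γ_3 on E[ω], E[ω²], E[ω⁴], assume (N′) admits a minimizer, the interior point condition (γ_1, γ_2, γ_3, 1) ∈ int{{(E_μ^Ω[ω], E_μ^Ω[ω²], E_μ^Ω[ω⁴], E_μ^Ω[1]) : μ ⪰ 0} + ℝ_+³ × {0}} holds, and max(N3) = min(N4), where (N4) is the SDP: minimize z¹ + z² over y¹, y² ∈ ℝ⁵ and z¹, z² ∈ ℝ subject to y_1¹ + y_1² ≤ γ_1, y_2¹ + y_2² ≤ γ_2, y_4¹ + y_4² ≤ γ_3, y_0¹ + y_0² = 1, x y_0¹ − y_1¹ ≤ z¹, 0 ≤ z², and for k=1,2: y_0^k F_0 + y_1^k F_1 ⪰ 0 and the 3×3 Hankel matrix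 [[y_0^k, y_1^k, y_2^k],[y_1^k, y_2^k, y_3^k],[y_2^k, y_3^k, y_4^k]] ⪰ 0. Let (ȳ^k, z̄^k) be a minimizer of (N4) with ȳ_0^k > 0 for k = 1,2, and set û^k = ȳ_1^k / ȳ_0^k. Then ȳ_0¹ 𝟙_{û¹} + ȳ_0² 𝟙_{û²} is a minimizer of (N′). -/
open MeasureTheory Matrix
open scoped BigOperators

noncomputable section

/-- Feasibility for the recovery SDP (N4). -/
def News4RecFeasible (ωlo ωhi x γ1 γ2 γ3 : ℝ) (y : Fin 2 → Fin 5 → ℝ)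
    (z : Fin 2 → ℝ) : Prop :=
  y 0 1 + y 1 1 ≤ γ1 ∧ y 0 2 + y 1 2 ≤ γ2 ∧ y 0 4 + y 1 4 ≤ γ3 ∧
  y 0 0 + y 1 0 = 1 ∧ x * y 0 0 - y 0 1 ≤ z 0 ∧ 0 ≤ z 1 ∧
  (∀ k, ((y k 0) • !![-ωlo, 0; 0, ωhi] + (y k 1) • !![(1:ℝ), 0; 0, -1]).PosSemidef) ∧
  (∀ k, (!![y k 0, y k 1, y k 2; y k 1, y k 2, y k 3;
            y k 2, y k 3, y k 4]).PosSemidef)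

lemma psd_poly (Q : Matrix (Fin 3) (Fin 3) ℝ) (hQ : Q.PosSemidef) (v : ℝ) :
    0 ≤ (Q * B0).trace + (Q * B1).trace * v + (Q * B2).trace * v ^ 2
      + (Q * B3).trace * v ^ 3 + (Q * B4).trace * v ^ 4 := by
  have h := hQ.dotProduct_mulVec_nonneg ![1, v, v ^ 2]
  simp [B0, B1, B2, B3, B4, Matrix.trace, Matrix.mul_apply, Fin.sum_univ_three, dotProduct,
    Matrix.mulVec] at h ⊢
  nlinarith [h]

lemma psd_box (Z : Matrix (Fin 2) (Fin 2) ℝ) (hZ : Z.PosSemidef) (a b v : ℝ)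
    (hv : v ∈ Set.Icc a b) :
    0 ≤ (Z * !![-a, 0; 0, b]).trace + (Z * !![(1:ℝ), 0; 0, -1]).trace * v := by
  have h1 : 0 ≤ Z 0 0 := hZ.diag_nonneg
  have h2 : 0 ≤ Z 1 1 := hZ.diag_nonneg
  simp [Matrix.trace, Matrix.mul_apply, Fin.sum_univ_two]
  nlinarith [mul_nonneg h1 (sub_nonneg.2 hv.1), mul_nonneg h2 (sub_nonneg.2 hv.2)]

lemma hankel_ineq (a b c d e : ℝ) (ha : 0 < a)
    (h : (!![a, b, c; b, c, d; c, d, e]).PosSemidef) :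
    a * (b / a) ^ 2 ≤ c ∧ a * (b / a) ^ 4 ≤ e := by
  have h1 := h.dotProduct_mulVec_nonneg ![-b, a, 0]
  have h2 := h.dotProduct_mulVec_nonneg ![-c, 0, a]
  simp [Fin.sum_univ_three, dotProduct, Matrix.mulVec] at h1 h2
  have k1 : b ^ 2 ≤ a * c := by
    have : 0 ≤ a * (a * c - b ^ 2) := by nlinarith
    have := nonneg_of_mul_nonneg_right this ha
    linarith
  have k2 : c ^ 2 ≤ a * e := by
    have : 0 ≤ a * (a * e - c ^ 2) := by nlinarith
    have := nonneg_of_mul_nonneg_right this ha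
    linarith
  have e1 : a * (b / a) ^ 2 = b ^ 2 / a := by field_simp
  have e2 : a * (b / a) ^ 4 = (b ^ 2 / a) ^ 2 / a := by field_simp
  have c1 : b ^ 2 / a ≤ c := by rw [div_le_iff₀ ha]; linarith
  refine ⟨e1 ▸ c1, ?_⟩
  rw [e2, div_le_iff₀ ha]
  have : 0 ≤ b ^ 2 / a := by positivity
  nlinarith

lemma int_two (a b u v : ℝ) (ha : 0 < a) (hb : 0 < b) (f : ℝ → ℝ) :
    ∫ ω, f ω ∂(ENNReal.ofReal a • Measure.dirac u + ENNReal.ofReal b • Measure.dirac v)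
      = a * f u + b * f v := by
  rw [integral_add_measure, integral_smul_measure, integral_smul_measure]
  · simp [ENNReal.toReal_ofReal ha.le, ENNReal.toReal_ofReal hb.le]
  · exact (integrable_dirac (by simp)).smul_measure (by simp)
  · exact (integrable_dirac (by simp)).smul_measure (by simp)

lemma box_mem (l h a b : ℝ) (ha : 0 < a)
    (hp : (a • !![-l, 0; 0, h] + b • !![(1:ℝ), 0; 0, -1]).PosSemidef) :
    b / a ∈ Set.Icc l h := by
  have h1 := hp.diag_nonneg (i := 0)
  have h2 := hp.diag_nonneg (i := 1)
  simp at h1 h2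
  constructor
  · rw [le_div_iff₀ ha]; linarith
  · rw [div_le_iff₀ ha]; linarith

/-- Recovering an optimal probability measure for the
Newsvendor moment problem with fourth-order moments from the SDP (N4). -/
theorem newsvendor_fourth_moment_recovery (ωlo ωhi x γ1 γ2 γ3 : ℝ)
    (h0 : 0 ≤ ωlo) (hlt : ωlo < ωhi)
    (hPmin : ∃ p, IsLeast (News4Vals ωlo ωhi x γ1 γ2 γ3) p)
    (hint : ((γ1, γ2, γ3, (1 : ℝ)) : ℝ × ℝ × ℝ × ℝ) ∈ interior
      {q : ℝ × ℝ × ℝ × ℝ | ∃ μ : Measure ℝ, IsFiniteMeasure μ ∧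
        μ (Set.Icc ωlo ωhi)ᶜ = 0 ∧ ∃ s1 s2 s3 : ℝ, 0 ≤ s1 ∧ 0 ≤ s2 ∧ 0 ≤ s3 ∧
        q.1 = (∫ ω, ω ∂μ) + s1 ∧ q.2.1 = (∫ ω, ω ^ 2 ∂μ) + s2 ∧
        q.2.2.1 = (∫ ω, ω ^ 4 ∂μ) + s3 ∧ q.2.2.2 = (μ Set.univ).toReal})
    (ybar : Fin 2 → Fin 5 → ℝ) (zbar : Fin 2 → ℝ)
    (hfeas : News4RecFeasible ωlo ωhi x γ1 γ2 γ3 ybar zbar)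
    (hminN4 : ∀ y z, News4RecFeasible ωlo ωhi x γ1 γ2 γ3 y z →
      zbar 0 + zbar 1 ≤ z 0 + z 1)
    (hstrong : IsGreatest (News4SDPVals ωlo ωhi x γ1 γ2 γ3) (zbar 0 + zbar 1))
    (hy0 : ∀ k, 0 < ybar k 0) :
    (IsProbabilityMeasure
        (ENNReal.ofReal (ybar 0 0) • Measure.dirac (ybar 0 1 / ybar 0 0)
          + ENNReal.ofReal (ybar 1 0) • Measure.dirac (ybar 1 1 / ybar 1 0)) ∧
      (ENNReal.ofReal (ybar 0 0) • Measure.dirac (ybar 0 1 / ybar 0 0)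
          + ENNReal.ofReal (ybar 1 0) • Measure.dirac (ybar 1 1 / ybar 1 0))
        (Set.Icc ωlo ωhi)ᶜ = 0 ∧
      (∫ ω, ω ∂(ENNReal.ofReal (ybar 0 0) • Measure.dirac (ybar 0 1 / ybar 0 0)
          + ENNReal.ofReal (ybar 1 0) • Measure.dirac (ybar 1 1 / ybar 1 0)))
        ≤ γ1 ∧
      (∫ ω, ω ^ 2 ∂(ENNReal.ofReal (ybar 0 0) • Measure.dirac (ybar 0 1 / ybar 0 0)
          + ENNReal.ofReal (ybar 1 0) • Measure.dirac (ybar 1 1 / ybar 1 0)))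
        ≤ γ2 ∧
      (∫ ω, ω ^ 4 ∂(ENNReal.ofReal (ybar 0 0) • Measure.dirac (ybar 0 1 / ybar 0 0)
          + ENNReal.ofReal (ybar 1 0) • Measure.dirac (ybar 1 1 / ybar 1 0)))
        ≤ γ3) ∧
    ∀ val ∈ News4Vals ωlo ωhi x γ1 γ2 γ3,
      (∫ ω, min (x - ω) 0
          ∂(ENNReal.ofReal (ybar 0 0) • Measure.dirac (ybar 0 1 / ybar 0 0)
            + ENNReal.ofReal (ybar 1 0) • Measure.dirac (ybar 1 1 / ybar 1 0)))
        ≤ val := by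
  obtain ⟨f1, f2, f3, f4, f5, f6, f7, f8⟩ := hfeas
  have a0 := hy0 0
  have a1 := hy0 1
  have m0 := box_mem _ _ _ _ a0 (f7 0)
  have m1 := box_mem _ _ _ _ a1 (f7 1)
  obtain ⟨p0, q0⟩ := hankel_ineq _ _ _ _ _ a0 (f8 0)
  obtain ⟨p1, q1⟩ := hankel_ineq _ _ _ _ _ a1 (f8 1)
  have r0 : ybar 0 0 * (ybar 0 1 / ybar 0 0) = ybar 0 1 := by field_simp
  have r1 : ybar 1 0 * (ybar 1 1 / ybar 1 0) = ybar 1 1 := by field_simp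
  refine ⟨⟨⟨?_⟩, ?_, ?_, ?_, ?_⟩, ?_⟩
  · simp [← ENNReal.ofReal_add a0.le a1.le, f4]
  · have hm : MeasurableSet (Set.Icc ωlo ωhi)ᶜ := measurableSet_Icc.compl
    simp only [Measure.add_apply, Measure.smul_apply, Measure.dirac_apply' _ hm]
    simp [Set.indicator, m0.1, m0.2, m1.1, m1.2]
  · rw [int_two _ _ _ _ a0 a1 (fun ω => ω)]
    linarith
  · rw [int_two _ _ _ _ a0 a1 (fun ω => ω ^ 2)]
    linarith
  · rw [int_two _ _ _ _ a0 a1 (fun ω => ω ^ 4)]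
    linarith
  · rintro val ⟨μ, hμ, hsupp, g1, g2, g3, rfl⟩
    rw [int_two _ _ _ _ a0 a1 (fun ω => min (x - ω) 0)]
    obtain ⟨⟨l1, l2, l3, l4, Z, Z', Q, Q', n1, n2, n3, hZ, hZ', hQ, hQ', e1, e2, e3, e4, e5,
      e6, e7, e8, e9, e10, hval⟩, -⟩ := hstrong
    have hae : ∀ᵐ ω ∂μ, ω ∈ Set.Icc ωlo ωhi := by
      rw [ae_iff]; exact hsupp
    have hI : ∀ f : ℝ → ℝ, Continuous f → Integrable f μ := by
      intro f hf
      obtain ⟨C, hC⟩ := isCompact_Icc.exists_bound_of_continuousOn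
        (hf.continuousOn (s := Set.Icc ωlo ωhi))
      refine Integrable.of_bound hf.aestronglyMeasurable C ?_
      filter_upwards [hae] with ω hω using hC ω hω
    have i1 := hI (fun ω => ω) (by fun_prop)
    have i2 := hI (fun ω => ω ^ 2) (by fun_prop)
    have i4 := hI (fun ω => ω ^ 4) (by fun_prop)
    have key : ∫ ω, (-l1 * ω + -l2 * ω ^ 2 + -l3 * ω ^ 4 + -l4) ∂μ
        ≤ ∫ ω, min (x - ω) 0 ∂μ := by
      refine integral_mono_ae (hI _ (by fun_prop)) (hI _ (by fun_prop)) ?_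
      filter_upwards [hae] with ω hω
      have t1 := psd_poly Q hQ ω
      have t2 := psd_poly Q' hQ' ω
      have t3 := psd_box Z hZ _ _ ω hω
      have t4 := psd_box Z' hZ' _ _ ω hω
      rw [e1, e3, e5, e7, e9] at t1
      rw [e2, e4, e6, e8, e10] at t2
      exact le_min (by linarith) (by linarith)
    have hcalc : ∫ ω, (-l1 * ω + -l2 * ω ^ 2 + -l3 * ω ^ 4 + -l4) ∂μ
        = -l1 * (∫ ω, ω ∂μ) + -l2 * (∫ ω, ω ^ 2 ∂μ) + -l3 * (∫ ω, ω ^ 4 ∂μ) + -l4 := by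
      rw [integral_add (hI _ (by fun_prop)) (hI _ (by fun_prop)),
        integral_add (hI _ (by fun_prop)) (hI _ (by fun_prop)),
        integral_add (hI _ (by fun_prop)) (hI _ (by fun_prop)),
        integral_const_mul, integral_const_mul, integral_const_mul]
      simp
    have b0 : ybar 0 0 * min (x - ybar 0 1 / ybar 0 0) 0 ≤ x * ybar 0 0 - ybar 0 1 := by
      have := mul_le_mul_of_nonneg_left (min_le_left (x - ybar 0 1 / ybar 0 0) 0) a0.le
      nlinarith
    have b1 : ybar 1 0 * min (x - ybar 1 1 / ybar 1 0) 0 ≤ 0 :=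
      mul_nonpos_of_nonneg_of_nonpos a1.le (min_le_right _ _)
    rw [hcalc] at key
    have c1 := mul_le_mul_of_nonneg_left g1 n1
    have c2 := mul_le_mul_of_nonneg_left g2 n2
    have c3 := mul_le_mul_of_nonneg_left g3 n3
    have : ybar 0 0 * min (x - ybar 0 1 / ybar 0 0) 0
      + ybar 1 0 * min (x - ybar 1 1 / ybar 1 0) 0 ≤ zbar 0 + zbar 1 := by linarith
    linarith

end
end

section
/- Let Ω = [0, R] ⊂ ℝ, R > 0, written as Ω = {v : F_0 + vF_1 ⪰ 0} with F_0 = diag(0, R), F_1 = diag(1, −1). For k = 1,…,n let α_k, β_k, b_k ≥ 0 and c_k ≤ −α_k b_k² − β_k b_k⁴, and let g(v) = min_{k=1,…,2n} max_{ℓ=1,2} g_ℓ^k(v), where g_1^k(v) = g_2^k(v) = α_k(v−b_k)² + β_k(v−b_k)⁴ + c_k, g_1^{n+k}(v) = −(α_k b_k + β_k b_k³)v + (α_k b_k² + β_k b_k⁴ + c_k), g_2^{n+k}(v) = c_k, for k=1,…,n. Consider the moment problem (V): minimize E_μ^Ω[g(ω)] over probability measures μ on Ω subject to E_μ^Ω[ω]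 ≤ γ_1 and E_μ^Ω[ω²] ≤ γ_2. Consider the SDP (V1): maximize −λ_1γ_1 − λ_2γ_2 − λ_3 over λ ∈ ℝ_+² × ℝ, δ_k ∈ [0,1], 2×2 PSD matrices Z_k, Z_k′, and 3×3 PSD matrices Q_k, Q_k′ (k=1,…,n), subject to, for each k: tr(Q_k B_0) = α_k b_k² + β_k b_k⁴ + c_k + λ_3 − tr(Z_k F_0); tr(Q_k B_1) = −2α_k b_k − 4β_k b_k³ + λ_1 − tr(Z_k F_1); tr(Q_k B_2) = α_k + 6β_k b_k² + λ_2; tr(Q_k B_3) = −4β_k b_k; tr(Q_k B_4) = β_k; tr(Q_k′ B_0) = δ_k α_k b_k² + δ_k β_k b_k⁴ + c_k + λ_3 − tr(Z_k′ F_0); tr(Q_k′ B_1) = −δ_k α_k b_k − δ_k β_k b_k³ + λ_1 − tr(Z_k′ F_1); tr(Q_k′ B_2) = λ_2; tr(Q_k′ B_3) = tr(Q_k′ B_4) = 0. Assume (V) admits a minimizer and (γ_1, γ_2, 1) ∈ int{{(E_μ^Ω[ω], E_μ^Ω[ω²], E_μ^Ω[1]) : μ a non-negative finite Borel measure on Ω}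 + ℝ_+² × {0}}. Then min(V) = max(V1). -/
open MeasureTheory Matrix
open scoped BigOperators

noncomputable section

/-- The piecewise SOS-convex function
`g(v) = min_{k=1,…,2n} max_{ℓ=1,2} g_ℓ^k(v)` of the revenue problem: the
first `n` pieces are `α_k (v−b_k)² + β_k (v−b_k)⁴ + c_k` (both `ℓ` give the
same polynomial) and the last `n` pieces are
`max (−(α_k b_k + β_k b_k³) v + (α_k b_k² + β_k b_k⁴ + c_k)) c_k`. -/
def gRev {n : ℕ} [NeZero n] (al be b c : Fin n → ℝ) (v : ℝ) : ℝ :=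
  Finset.univ.inf' Finset.univ_nonempty fun kk : Fin 2 × Fin n =>
    if kk.1 = 0 then
      al kk.2 * (v - b kk.2) ^ 2 + be kk.2 * (v - b kk.2) ^ 4 + c kk.2
    else
      max (-(al kk.2 * b kk.2 + be kk.2 * b kk.2 ^ 3) * v
            + (al kk.2 * b kk.2 ^ 2 + be kk.2 * b kk.2 ^ 4 + c kk.2))
          (c kk.2)

/-- The value set of the revenue moment problem (V). -/
def RevVals {n : ℕ} [NeZero n] (al be b c : Fin n → ℝ) (R γ1 γ2 : ℝ) : Set ℝ :=
  {val | ∃ μ : Measure ℝ, IsProbabilityMeasure μ ∧ μ (Set.Icc 0 R)ᶜ = 0 ∧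
    (∫ ω, ω ∂μ) ≤ γ1 ∧ (∫ ω, ω ^ 2 ∂μ) ≤ γ2 ∧
    val = ∫ ω, gRev al be b c ω ∂μ}

/-- The value set of the SDP (V1). -/
def RevSDPVals {n : ℕ} (al be b c : Fin n → ℝ) (R γ1 γ2 : ℝ) : Set ℝ :=
  {val | ∃ (lam1 lam2 lam3 : ℝ) (δ : Fin n → ℝ)
      (Z Z' : Fin n → Matrix (Fin 2) (Fin 2) ℝ)
      (Q Q' : Fin n → Matrix (Fin 3) (Fin 3) ℝ),
    0 ≤ lam1 ∧ 0 ≤ lam2 ∧ (∀ k, 0 ≤ δ k ∧ δ k ≤ 1) ∧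
    (∀ k, (Z k).PosSemidef) ∧ (∀ k, (Z' k).PosSemidef) ∧
    (∀ k, (Q k).PosSemidef) ∧ (∀ k, (Q' k).PosSemidef) ∧
    (∀ k, (Q k * B0).trace
      = al k * b k ^ 2 + be k * b k ^ 4 + c k + lam3
        - (Z k * !![(0:ℝ), 0; 0, R]).trace) ∧
    (∀ k, (Q k * B1).trace
      = -2 * al k * b k - 4 * be k * b k ^ 3 + lam1
        - (Z k * !![(1:ℝ), 0; 0, -1]).trace) ∧
    (∀ k, (Q k * B2).trace = al k + 6 * be k * b k ^ 2 + lam2) ∧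
    (∀ k, (Q k * B3).trace = -4 * be k * b k) ∧
    (∀ k, (Q k * B4).trace = be k) ∧
    (∀ k, (Q' k * B0).trace
      = δ k * al k * b k ^ 2 + δ k * be k * b k ^ 4 + c k + lam3
        - (Z' k * !![(0:ℝ), 0; 0, R]).trace) ∧
    (∀ k, (Q' k * B1).trace
      = -(δ k * al k * b k) - δ k * be k * b k ^ 3 + lam1
        - (Z' k * !![(1:ℝ), 0; 0, -1]).trace) ∧
    (∀ k, (Q' k * B2).trace = lam2) ∧
    (∀ k, (Q' k * B3).trace = 0) ∧ (∀ k, (Q' k * B4).trace = 0) ∧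
    val = -lam1 * γ1 - lam2 * γ2 - lam3}


/-- A convex quartic, nonnegative on `[0,R]`, has a certificate. -/
lemma sos_cert (R : ℝ) (hR : 0 < R) (be b s t r : ℝ) (hbe : 0 ≤ be) (hs : 0 ≤ s)
    (h : ∀ v ∈ Set.Icc 0 R, 0 ≤ be * (v - b) ^ 4 + s * v ^ 2 + t * v + r) :
    ∃ (Z : Matrix (Fin 2) (Fin 2) ℝ) (Q : Matrix (Fin 3) (Fin 3) ℝ),
      Z.PosSemidef ∧ Q.PosSemidef ∧
      (Q * B0).trace = be * b ^ 4 + r - (Z * !![(0:ℝ), 0; 0, R]).trace ∧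
      (Q * B1).trace = -4 * be * b ^ 3 + t - (Z * !![(1:ℝ), 0; 0, -1]).trace ∧
      (Q * B2).trace = 6 * be * b ^ 2 + s ∧
      (Q * B3).trace = -4 * be * b ∧
      (Q * B4).trace = be := by
  obtain ⟨m, hm, hmin⟩ := isCompact_Icc.exists_isMinOn (Set.nonempty_Icc.2 hR.le)
    (f := fun v : ℝ => be * (v - b) ^ 4 + s * v ^ 2 + t * v + r) (by fun_prop)
  set D : ℝ := 4 * be * (m - b) ^ 3 + 2 * s * m + t with hD
  -- first-order condition
  have hder : HasDerivAt (fun v : ℝ => be * (v - b) ^ 4 + s * v ^ 2 + t * v + r) D m := by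
    have h1 := ((((hasDerivAt_id m).sub_const b).pow 4).const_mul be).add
      (((hasDerivAt_id m).pow 2).const_mul s)
    have h2 := (h1.add ((hasDerivAt_id m).const_mul t)).add_const r
    refine HasDerivAt.congr_deriv (f' := _) h2 ?_
    rw [hD]; simp; ring
  have hfo : ∀ y ∈ Set.Icc 0 R, 0 ≤ D * (y - m) := by
    intro y hy
    by_contra hneg
    push Not at hneg
    have hg : HasDerivAt (fun u : ℝ => be * ((m + u * (y - m)) - b) ^ 4
        + s * (m + u * (y - m)) ^ 2 + t * (m + u * (y - m)) + r) (D * (y - m)) 0 := by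
      have hi : HasDerivAt (fun u : ℝ => m + u * (y - m)) (y - m) 0 := by
        simpa using ((hasDerivAt_id (0:ℝ)).mul_const (y - m)).const_add m
      have := HasDerivAt.comp (h₂ := fun v : ℝ => be * (v - b) ^ 4 + s * v ^ 2 + t * v + r)
        (0:ℝ) (h₂' := D) (by simpa using hder) hi
      exact this
    have hev := hg.hasDerivWithinAt (s := Set.Ioi 0)
    have hsl := (hasDerivWithinAt_iff_tendsto_slope' (by simp)).1 hev
    have hnn : 0 ≤ D * (y - m) := by
      refine ge_of_tendsto hsl ?_
      have : Set.Ioo (0:ℝ) 1 ∈ nhdsWithin (0:ℝ) (Set.Ioi 0) := Ioo_mem_nhdsGT one_pos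
      filter_upwards [this] with u hu
      have hmem : m + u * (y - m) ∈ Set.Icc 0 R := by
        constructor <;> nlinarith [hu.1, hu.2, hy.1, hy.2, hm.1, hm.2, mul_nonneg hu.1.le hy.1,
          mul_nonneg hu.1.le (sub_nonneg.2 hy.2), mul_nonneg (sub_nonneg.2 hu.2.le) hm.1,
          mul_nonneg (sub_nonneg.2 hu.2.le) (sub_nonneg.2 hm.2)]
      have := hmin hmem
      simp only [Set.mem_ofPred_eq] at this
      rw [slope_def_field]
      apply div_nonneg _ (by simpa using hu.1.le)
      simp only [zero_mul, add_zero]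
      linarith
    linarith
  have hpm := h m hm
  -- multipliers
  obtain ⟨z1, z2, hz1, hz2, hz, hzm⟩ : ∃ z1 z2 : ℝ, 0 ≤ z1 ∧ 0 ≤ z2 ∧ D = z1 - z2 ∧
      D * m = - (z2 * R) := by
    have h0 := hfo 0 ⟨le_rfl, hR.le⟩
    have h1 := hfo R ⟨hR.le, le_rfl⟩
    rcases le_total 0 D with hd | hd
    · refine ⟨D, 0, hd, le_rfl, by ring, ?_⟩
      have := mul_nonneg hd hm.1
      nlinarith
    · refine ⟨0, -D, le_rfl, by linarith, by ring, ?_⟩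
      have := mul_nonneg (neg_nonneg.2 hd) (sub_nonneg.2 hm.2)
      nlinarith
  set P : ℝ := be * (m - b) ^ 4 + s * m ^ 2 + t * m + r with hP
  set S : ℝ := 2 * be * (m - b) ^ 2 + s with hS
  have hSn : 0 ≤ S := by positivity
  refine ⟨Matrix.diagonal ![z1, z2],
    P • Matrix.vecMulVec ![1, 0, 0] ![1, 0, 0]
    + be • Matrix.vecMulVec ![2 * b * m - m ^ 2, -2 * b, 1] ![2 * b * m - m ^ 2, -2 * b, 1]
    + S • Matrix.vecMulVec ![-m, 1, 0] ![-m, 1, 0], ?_, ?_, ?_, ?_, ?_, ?_, ?_⟩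
  · apply Matrix.PosSemidef.diagonal
    intro i; fin_cases i <;> simpa
  · have key : ∀ x : Fin 3 → ℝ, (Matrix.vecMulVec x x).PosSemidef := fun x => by
      simpa using Matrix.posSemidef_vecMulVec_self_star x
    exact (((key _).smul hpm).add ((key _).smul hbe)).add ((key _).smul hSn)
  all_goals
    simp [Matrix.trace, Matrix.mul_apply, Fin.sum_univ_succ, B0, B1, B2, B3, B4,
      Matrix.diagonal]
  · linear_combination hzm - m * hD + hP + m^2 * hS
  · linear_combination (-1 : ℝ) * hz + hD - 2 * m * hS
  · linear_combination hS
  · ring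

lemma delta_exists (R : ℝ) (A b l1 l2 r : ℝ) (hA : 0 ≤ A) (hb : 0 ≤ b) (h1 : 0 ≤ l1) (h2 : 0 ≤ l2)
    (h : ∀ v ∈ Set.Icc 0 R, 0 ≤ max (A * (b - v)) 0 + (l2 * v ^ 2 + l1 * v + r)) :
    ∃ d : ℝ, 0 ≤ d ∧ d ≤ 1 ∧
      ∀ v ∈ Set.Icc 0 R, 0 ≤ d * (A * (b - v)) + (l2 * v ^ 2 + l1 * v + r) := by
  have hle : ∀ v ∈ Set.Icc 0 R, v ≤ b → 0 ≤ A * (b - v) + (l2 * v ^ 2 + l1 * v + r) := by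
    intro v hv hvb
    have := h v hv
    rwa [max_eq_left (mul_nonneg hA (by linarith))] at this
  rcases le_total R b with hRb | hbR
  · exact ⟨1, zero_le_one, le_rfl, fun v hv => by
      rw [one_mul]; exact hle v hv (hv.2.trans hRb)⟩
  have hbb := hle b ⟨hb, hbR⟩ le_rfl
  rcases le_or_gt (2 * l2 * b + l1) A with hc | hc
  · rcases hA.eq_or_lt with h0 | h0
    · refine ⟨0, le_rfl, zero_le_one, fun v hv => ?_⟩
      have := h v hv
      simpa [← h0] using this
    · refine ⟨(2 * l2 * b + l1) / A, by positivity, (div_le_one h0).2 hc, fun v hv => ?_⟩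
      have : (2 * l2 * b + l1) / A * (A * (b - v)) = (2 * l2 * b + l1) * (b - v) := by
        field_simp
      rw [this]
      nlinarith [mul_nonneg h2 (sq_nonneg (v - b))]
  · refine ⟨1, zero_le_one, le_rfl, fun v hv => ?_⟩
    rw [one_mul]
    rcases le_total v b with hvb | hvb
    · exact hle v hv hvb
    · nlinarith [mul_nonneg h2 (sq_nonneg (v - b)), mul_nonneg (sub_nonneg.2 hc.le) (sub_nonneg.2 hvb)]

/-- Nonnegativity from certificate. -/
lemma cert_nonneg (R : ℝ) (Z : Matrix (Fin 2) (Fin 2) ℝ) (Q : Matrix (Fin 3) (Fin 3) ℝ)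
    (hZ : Z.PosSemidef) (hQ : Q.PosSemidef) (v : ℝ) (hv : v ∈ Set.Icc 0 R) :
    0 ≤ ((Q * B0).trace + (Z * !![(0:ℝ), 0; 0, R]).trace)
      + ((Q * B1).trace + (Z * !![(1:ℝ), 0; 0, -1]).trace) * v
      + (Q * B2).trace * v ^ 2 + (Q * B3).trace * v ^ 3 + (Q * B4).trace * v ^ 4 := by
  have h1 := hQ.dotProduct_mulVec_nonneg ![1, v, v ^ 2]
  have h2 : 0 ≤ Z 0 0 := hZ.diag_nonneg
  have h3 : 0 ≤ Z 1 1 := hZ.diag_nonneg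
  have h4 := mul_nonneg h2 hv.1
  have h5 := mul_nonneg h3 (sub_nonneg.2 hv.2)
  simp [Matrix.trace, Matrix.mul_apply, Fin.sum_univ_succ, B0, B1, B2, B3, B4, dotProduct,
    Matrix.mulVec] at h1 ⊢
  nlinarith

lemma integrable_of_cont {R : ℝ} {μ : Measure ℝ} [IsFiniteMeasure μ] (hμ : μ (Set.Icc 0 R)ᶜ = 0)
    {f : ℝ → ℝ} (hf : Continuous f) : Integrable f μ := by
  have h1 : IntegrableOn f (Set.Icc 0 R) μ := hf.continuousOn.integrableOn_Icc
  have h2 : μ.restrict (Set.Icc 0 R) = μ :=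
    Measure.restrict_eq_self_of_ae_mem (by rw [ae_iff]; exact hμ)
  rwa [IntegrableOn, h2] at h1

/-- The cone of generalized moments. -/
def momCone (g : ℝ → ℝ) (R : ℝ) : Set (ℝ × ℝ × ℝ × ℝ) :=
  {x | ∃ μ : Measure ℝ, IsFiniteMeasure μ ∧ μ (Set.Icc 0 R)ᶜ = 0 ∧
    (∫ ω, ω ∂μ) ≤ x.1 ∧ (∫ ω, ω ^ 2 ∂μ) ≤ x.2.1 ∧ (μ Set.univ).toReal = x.2.2.1 ∧
    (∫ ω, g ω ∂μ) ≤ x.2.2.2}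

lemma momCone_add {g : ℝ → ℝ} (hg : Continuous g) {R : ℝ} {x y : ℝ × ℝ × ℝ × ℝ}
    (hx : x ∈ momCone g R) (hy : y ∈ momCone g R) : x + y ∈ momCone g R := by
  obtain ⟨μ, hf, h0, h1, h2, h3, h4⟩ := hx
  obtain ⟨ν, kf, k0, k1, k2, k3, k4⟩ := hy
  refine ⟨μ + ν, inferInstance, by simp [h0, k0], ?_, ?_, ?_, ?_⟩
  · rw [integral_add_measure (f := fun ω : ℝ => ω) (integrable_of_cont h0 continuous_id)
      (integrable_of_cont k0 continuous_id)]
    exact add_le_add h1 k1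
  · rw [integral_add_measure (integrable_of_cont h0 (by fun_prop))
      (integrable_of_cont k0 (by fun_prop))]
    exact add_le_add h2 k2
  · rw [Measure.add_apply, ENNReal.toReal_add (measure_ne_top _ _) (measure_ne_top _ _), h3, k3]
    rfl
  · rw [integral_add_measure (integrable_of_cont h0 hg) (integrable_of_cont k0 hg)]
    exact add_le_add h4 k4

lemma momCone_smul {g : ℝ → ℝ} {R : ℝ} {x : ℝ × ℝ × ℝ × ℝ} {a : ℝ} (ha : 0 ≤ a)
    (hx : x ∈ momCone g R) : a • x ∈ momCone g R := by
  obtain ⟨μ, hf, h0, h1, h2, h3, h4⟩ := hx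
  refine ⟨a.toNNReal • μ, inferInstance, by simp [h0], ?_, ?_, ?_, ?_⟩
  · rw [integral_smul_nnreal_measure]
    simpa [NNReal.smul_def, ha] using mul_le_mul_of_nonneg_left h1 ha
  · rw [integral_smul_nnreal_measure]
    simpa [NNReal.smul_def, ha] using mul_le_mul_of_nonneg_left h2 ha
  · rw [Measure.smul_apply, ENNReal.smul_def, smul_eq_mul, ENNReal.toReal_mul, h3]
    rw [ENNReal.coe_toReal, Real.coe_toNNReal a ha]
    rfl
  · rw [integral_smul_nnreal_measure]
    simpa [NNReal.smul_def, ha] using mul_le_mul_of_nonneg_left h4 ha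

lemma dual_exists (g : ℝ → ℝ) (hg : Continuous g) (R γ1 γ2 p : ℝ)
    (hint : ((γ1, γ2, (1 : ℝ)) : ℝ × ℝ × ℝ) ∈ interior
      {q : ℝ × ℝ × ℝ | ∃ μ : Measure ℝ, IsFiniteMeasure μ ∧
        μ (Set.Icc 0 R)ᶜ = 0 ∧ ∃ s1 s2 : ℝ, 0 ≤ s1 ∧ 0 ≤ s2 ∧
        q.1 = (∫ ω, ω ∂μ) + s1 ∧ q.2.1 = (∫ ω, ω ^ 2 ∂μ) + s2 ∧
        q.2.2 = (μ Set.univ).toReal})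
    (hp : ∀ μ : Measure ℝ, IsProbabilityMeasure μ → μ (Set.Icc 0 R)ᶜ = 0 →
      (∫ ω, ω ∂μ) ≤ γ1 → (∫ ω, ω ^ 2 ∂μ) ≤ γ2 → p ≤ ∫ ω, g ω ∂μ) :
    ∃ l1 l2 l3 : ℝ, 0 ≤ l1 ∧ 0 ≤ l2 ∧
      (∀ v ∈ Set.Icc 0 R, 0 ≤ g v + l1 * v + l2 * v ^ 2 + l3) ∧
      p ≤ -l1 * γ1 - l2 * γ2 - l3 := by
  set K := momCone g R with hK
  have hconv : Convex ℝ K := by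
    intro x hx y hy a b ha hb _
    exact momCone_add hg (momCone_smul ha hx) (momCone_smul hb hy)
  have hzero : (0 : ℝ × ℝ × ℝ × ℝ) ∈ K := by
    refine ⟨0, inferInstance, by simp, by simp, by simp, by simp, by simp⟩
  obtain ⟨M, hM⟩ := (isCompact_Icc (a := (0:ℝ)) (b := R)).exists_bound_of_continuousOn
    hg.continuousOn
  -- an interior point of the cone
  set U := interior {q : ℝ × ℝ × ℝ | ∃ μ : Measure ℝ, IsFiniteMeasure μ ∧
        μ (Set.Icc 0 R)ᶜ = 0 ∧ ∃ s1 s2 : ℝ, 0 ≤ s1 ∧ 0 ≤ s2 ∧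
        q.1 = (∫ ω, ω ∂μ) + s1 ∧ q.2.1 = (∫ ω, ω ^ 2 ∂μ) + s2 ∧
        q.2.2 = (μ Set.univ).toReal} with hU
  set W : Set (ℝ × ℝ × ℝ × ℝ) :=
    {x | (x.1, x.2.1, x.2.2.1) ∈ U ∧ x.2.2.1 < 2 ∧ 2 * |M| < x.2.2.2} with hW
  have hWo : IsOpen W := by
    refine IsOpen.inter ?_ (IsOpen.inter ?_ ?_)
    · exact isOpen_interior.preimage (by fun_prop :
        Continuous fun x : ℝ × ℝ × ℝ × ℝ => (x.1, x.2.1, x.2.2.1))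
    · exact isOpen_lt (f := fun x : ℝ × ℝ × ℝ × ℝ => x.2.2.1) (g := fun _ => 2)
        (by fun_prop) (by fun_prop)
    · exact isOpen_lt (f := fun _ => 2 * |M|) (g := fun x : ℝ × ℝ × ℝ × ℝ => x.2.2.2)
        (by fun_prop) (by fun_prop)
  have hWK : W ⊆ K := by
    rintro x ⟨hx1, hx2, hx3⟩
    obtain ⟨μ, hf, h0, s1, s2, hs1, hs2, e1, e2, e3⟩ := interior_subset hx1
    simp only at e1 e2 e3
    refine ⟨μ, hf, h0, by linarith, by linarith, e3.symm, ?_⟩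
    have hae : ∀ᵐ ω ∂μ, ‖g ω‖ ≤ |M| := by
      have : ∀ᵐ ω ∂μ, ω ∈ Set.Icc 0 R := by rw [ae_iff]; exact h0
      filter_upwards [this] with ω hω
      exact (hM ω hω).trans (le_abs_self M)
    have hb := norm_integral_le_of_norm_le_const hae
    have hb' : (∫ ω, g ω ∂μ) ≤ |M| * (μ Set.univ).toReal := (le_abs_self _).trans hb
    rw [← e3] at hb'
    nlinarith [abs_nonneg M]
  have hWint : W ⊆ interior K := interior_maximal hWK hWo
  set x1 : ℝ × ℝ × ℝ × ℝ := (γ1, γ2, 1, max (2 * |M| + 1) (p + 1)) with hx1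
  have hx1W : x1 ∈ W := ⟨hint, by norm_num [hx1], by
    have := le_max_left (2 * |M| + 1) (p + 1)
    simp only [hx1]; linarith⟩
  set x0 : ℝ × ℝ × ℝ × ℝ := (γ1, γ2, 1, p) with hx0
  have hx0K : x0 ∉ interior K := by
    intro hmem
    have hcont : Continuous fun e : ℝ => ((γ1, γ2, 1, p - e) : ℝ × ℝ × ℝ × ℝ) := by fun_prop
    have hn : (fun e : ℝ => ((γ1, γ2, 1, p - e) : ℝ × ℝ × ℝ × ℝ)) ⁻¹' interior K ∈ nhds (0:ℝ) :=
      (isOpen_interior.preimage hcont).mem_nhds (by simpa [hx0] using hmem)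
    obtain ⟨ε, hε, hball⟩ := Metric.mem_nhds_iff.1 hn
    have h2 : ((γ1, γ2, 1, p - ε / 2) : ℝ × ℝ × ℝ × ℝ) ∈ K := by
      apply interior_subset
      apply hball (a := ε / 2)
      rw [Metric.mem_ball, Real.dist_eq, sub_zero, abs_of_pos (by linarith)]
      linarith
    obtain ⟨μ, hf, h0, e1, e2, e3, e4⟩ := h2
    have hprob : IsProbabilityMeasure μ := ⟨by
      simp only at e3
      rwa [ENNReal.toReal_eq_one_iff] at e3⟩
    have := hp μ hprob h0 e1 e2
    simp only at e4
    linarith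
  obtain ⟨f, hf⟩ := geometric_hahn_banach_open_point hconv.interior isOpen_interior hx0K
  have hfK : ∀ x ∈ K, f x ≤ f x0 := by
    intro x hx
    have hcl : x ∈ closure (interior K) := by
      rw [hconv.closure_interior_eq_closure_of_nonempty_interior ⟨x1, hWint hx1W⟩]
      exact subset_closure hx
    have : closure (interior K) ⊆ {y | f y ≤ f x0} :=
      closure_minimal (fun y hy => (hf y hy).le) (isClosed_le f.continuous continuous_const)
    exact this hcl
  have hcone : ∀ x ∈ K, f x ≤ 0 := by
    intro x hx
    by_contra hneg
    push Not at hneg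
    have h0 : 0 ≤ f x0 := by simpa using hfK 0 hzero
    have hh := hfK _ (momCone_smul (a := f x0 / f x + 1) (by positivity) hx)
    rw [map_smul, smul_eq_mul, add_mul, div_mul_cancel₀ _ hneg.ne'] at hh
    linarith
  set a1 := f (1, 0, 0, 0)
  set a2 := f (0, 1, 0, 0)
  set a3 := f (0, 0, 1, 0)
  set a4 := f (0, 0, 0, 1)
  have hdec : ∀ w x y z : ℝ, f (w, x, y, z) = w * a1 + x * a2 + y * a3 + z * a4 := by
    intro w x y z
    have : ((w, x, y, z) : ℝ × ℝ × ℝ × ℝ) = w • (1, 0, 0, 0) + x • (0, 1, 0, 0)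
        + y • (0, 0, 1, 0) + z • (0, 0, 0, 1) := by simp
    rw [this]
    simp only [map_add, map_smul, smul_eq_mul]
    rfl
  have ha4 : a4 < 0 := by
    have := hf x1 (hWint hx1W)
    rw [hx1, hx0, hdec, hdec] at this
    have h3 := le_max_right (2 * |M| + 1) (p + 1)
    nlinarith
  have ha1 : a1 ≤ 0 := by
    apply hcone
    exact ⟨0, inferInstance, by simp, by simp, by simp, by simp, by simp⟩
  have ha2 : a2 ≤ 0 := by
    apply hcone
    exact ⟨0, inferInstance, by simp, by simp, by simp, by simp, by simp⟩
  have hx0n : 0 ≤ f x0 := by simpa using hfK 0 hzero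
  rw [hx0, hdec] at hx0n
  refine ⟨a1 / a4, a2 / a4, a3 / a4, div_nonneg_of_nonpos ha1 ha4.le,
    div_nonneg_of_nonpos ha2 ha4.le, ?_, ?_⟩
  · intro v hv
    have hd : ((v, v ^ 2, 1, g v) : ℝ × ℝ × ℝ × ℝ) ∈ K :=
      ⟨Measure.dirac v, inferInstance, by
        rw [Measure.dirac_apply' _ measurableSet_Icc.compl]; simp [hv.1, hv.2],
        by simp, by simp, by simp, by simp⟩
    have := hcone _ hd
    rw [hdec] at this
    have e : g v + a1 / a4 * v + a2 / a4 * v ^ 2 + a3 / a4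
        = (v * a1 + v ^ 2 * a2 + 1 * a3 + g v * a4) / a4 := by
      have := ha4.ne
      field_simp
      ring
    rw [e]
    exact div_nonneg_of_nonpos this ha4.le
  · have e : -(a1 / a4) * γ1 - a2 / a4 * γ2 - a3 / a4 - p
        = -((γ1 * a1 + γ2 * a2 + 1 * a3 + p * a4) / a4) := by
      have := ha4.ne
      field_simp
      ring
    have : (γ1 * a1 + γ2 * a2 + 1 * a3 + p * a4) / a4 ≤ 0 :=
      div_nonpos_of_nonneg_of_nonpos hx0n ha4.le
    linarith

lemma gRev_continuous {n : ℕ} [NeZero n] (al be b c : Fin n → ℝ) :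
    Continuous (gRev al be b c) := by
  unfold gRev
  apply Continuous.finset_inf'_apply
  intro i _
  split_ifs <;> fun_prop

lemma gRev_le_poly {n : ℕ} [NeZero n] (al be b c : Fin n → ℝ) (v : ℝ) (k : Fin n) :
    gRev al be b c v ≤ al k * (v - b k) ^ 2 + be k * (v - b k) ^ 4 + c k := by
  have := Finset.inf'_le (s := Finset.univ) (fun kk : Fin 2 × Fin n =>
    if kk.1 = 0 then
      al kk.2 * (v - b kk.2) ^ 2 + be kk.2 * (v - b kk.2) ^ 4 + c kk.2
    else
      max (-(al kk.2 * b kk.2 + be kk.2 * b kk.2 ^ 3) * v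
            + (al kk.2 * b kk.2 ^ 2 + be kk.2 * b kk.2 ^ 4 + c kk.2))
          (c kk.2)) (Finset.mem_univ ((0 : Fin 2), k))
  simp only [if_true] at this
  exact this

lemma gRev_le_max {n : ℕ} [NeZero n] (al be b c : Fin n → ℝ) (v : ℝ) (k : Fin n) :
    gRev al be b c v ≤ max (-(al k * b k + be k * b k ^ 3) * v
            + (al k * b k ^ 2 + be k * b k ^ 4 + c k)) (c k) := by
  have := Finset.inf'_le (s := Finset.univ) (fun kk : Fin 2 × Fin n =>
    if kk.1 = 0 then
      al kk.2 * (v - b kk.2) ^ 2 + be kk.2 * (v - b kk.2) ^ 4 + c kk.2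
    else
      max (-(al kk.2 * b kk.2 + be kk.2 * b kk.2 ^ 3) * v
            + (al kk.2 * b kk.2 ^ 2 + be kk.2 * b kk.2 ^ 4 + c kk.2))
          (c kk.2)) (Finset.mem_univ ((1 : Fin 2), k))
  simp only [one_ne_zero, if_false] at this
  exact this

lemma weak_duality {n : ℕ} [NeZero n] (al be b c : Fin n → ℝ) (R γ1 γ2 : ℝ) {d p : ℝ}
    (hd : d ∈ RevSDPVals al be b c R γ1 γ2) (hp : p ∈ RevVals al be b c R γ1 γ2) : d ≤ p := by
  obtain ⟨l1, l2, l3, δ, Z, Z', Q, Q', hl1, hl2, hδ, hZ, hZ', hQ, hQ', e0, e1, e2, e3, e4,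
    f0, f1, f2, f3, f4, rfl⟩ := hd
  obtain ⟨μ, hμ, h0, h1, h2, rfl⟩ := hp
  have hpt : ∀ v ∈ Set.Icc 0 R, -l1 * v - l2 * v ^ 2 - l3 ≤ gRev al be b c v := by
    intro v hv
    unfold gRev
    apply Finset.le_inf'
    rintro ⟨i, k⟩ _
    split_ifs
    · have := cert_nonneg R (Z k) (Q k) (hZ k) (hQ k) v hv
      rw [e0, e1, e2, e3, e4] at this
      simp only
      linarith
    · have := cert_nonneg R (Z' k) (Q' k) (hZ' k) (hQ' k) v hv
      rw [f0, f1, f2, f3, f4] at this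
      simp only
      have m1 := mul_le_mul_of_nonneg_left (le_max_left (-(al k * b k + be k * b k ^ 3) * v
            + (al k * b k ^ 2 + be k * b k ^ 4 + c k)) (c k)) (hδ k).1
      have m2 := mul_le_mul_of_nonneg_left (le_max_right (-(al k * b k + be k * b k ^ 3) * v
            + (al k * b k ^ 2 + be k * b k ^ 4 + c k)) (c k)) (sub_nonneg.2 (hδ k).2)
      linarith
  have i1 : Integrable (fun ω : ℝ => ω) μ := integrable_of_cont h0 continuous_id
  have i2 : Integrable (fun ω : ℝ => ω ^ 2) μ := integrable_of_cont h0 (by fun_prop)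
  have hle : (∫ ω, (-l1 * ω - l2 * ω ^ 2 - l3) ∂μ) ≤ ∫ ω, gRev al be b c ω ∂μ := by
    apply integral_mono_ae (((i1.const_mul _).sub (i2.const_mul _)).sub (integrable_const _))
      (integrable_of_cont h0 (gRev_continuous al be b c))
    have : ∀ᵐ ω ∂μ, ω ∈ Set.Icc 0 R := by rw [ae_iff]; exact h0
    filter_upwards [this] with ω hω using hpt ω hω
  rw [integral_sub (f := fun ω => -l1 * ω - l2 * ω ^ 2)
    ((i1.const_mul _).sub (i2.const_mul _)) (integrable_const _),
    integral_sub (i1.const_mul _) (i2.const_mul _), integral_const_mul, integral_const_mul] at hle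
  simp at hle
  nlinarith [mul_le_mul_of_nonneg_left h1 hl1, mul_le_mul_of_nonneg_left h2 hl2]

lemma sdp_feasible {n : ℕ} [NeZero n] (al be b c : Fin n → ℝ) (R γ1 γ2 : ℝ) (hR : 0 < R)
    (hal : ∀ k, 0 ≤ al k) (hbe : ∀ k, 0 ≤ be k) (hb : ∀ k, 0 ≤ b k)
    (l1 l2 l3 : ℝ) (h1 : 0 ≤ l1) (h2 : 0 ≤ l2)
    (h : ∀ v ∈ Set.Icc 0 R, 0 ≤ gRev al be b c v + l1 * v + l2 * v ^ 2 + l3) :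
    -l1 * γ1 - l2 * γ2 - l3 ∈ RevSDPVals al be b c R γ1 γ2 := by
  have hA : ∀ k, _ := fun k => sos_cert R hR (be k) (b k) (al k + l2) (-2 * al k * b k + l1)
    (al k * b k ^ 2 + c k + l3) (hbe k) (add_nonneg (hal k) h2) (fun v hv => by
      have := h v hv
      have := gRev_le_poly al be b c v k
      linarith)
  have hδ : ∀ k, _ := fun k => delta_exists R (al k * b k + be k * b k ^ 3) (b k) l1 l2 (c k + l3)
    (by have := hal k; have := hbe k; have := hb k; positivity) (hb k) h1 h2 (fun v hv => by
      have h3 := h v hv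
      have h4 := gRev_le_max al be b c v k
      have h5 : max (-(al k * b k + be k * b k ^ 3) * v
            + (al k * b k ^ 2 + be k * b k ^ 4 + c k)) (c k)
          = max ((al k * b k + be k * b k ^ 3) * (b k - v)) 0 + c k := by
        rw [← max_add_add_right]; congr 1 <;> ring
      linarith)
  choose δ hδ0 hδ1 hδ2 using hδ
  have hB : ∀ k, _ := fun k => sos_cert R hR 0 0 l2
    (-(δ k * al k * b k) - δ k * be k * b k ^ 3 + l1)
    (δ k * al k * b k ^ 2 + δ k * be k * b k ^ 4 + c k + l3) le_rfl h2 (fun v hv => by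
      have := hδ2 k v hv
      linarith)
  choose Z Q z1 z2 z3 z4 z5 z6 z7 using hA
  choose Z' Q' y1 y2 y3 y4 y5 y6 y7 using hB
  refine ⟨l1, l2, l3, δ, Z, Z', Q, Q', h1, h2, fun k => ⟨hδ0 k, hδ1 k⟩, z1, y1, z2, y2,
    ?_, ?_, ?_, ?_, z7, ?_, ?_, ?_, ?_, y7, rfl⟩ <;> intro k
  · rw [z3]; ring
  · rw [z4]; ring
  · rw [z5]; ring
  · rw [z6]
  · rw [y3]; ring
  · rw [y4]; ring
  · rw [y5]; ring
  · rw [y6]; ring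

/-- Exact SDP reformulation of the revenue maximization
moment problem: `min (V) = max (V1)`. -/
theorem revenue_sdp_duality {n : ℕ} [NeZero n]
    (al be b c : Fin n → ℝ) (R γ1 γ2 : ℝ) (hR : 0 < R)
    (hal : ∀ k, 0 ≤ al k) (hbe : ∀ k, 0 ≤ be k) (hb : ∀ k, 0 ≤ b k)
    (hc : ∀ k, c k ≤ -(al k * b k ^ 2) - be k * b k ^ 4)
    (hint : ((γ1, γ2, (1 : ℝ)) : ℝ × ℝ × ℝ) ∈ interior
      {q : ℝ × ℝ × ℝ | ∃ μ : Measure ℝ, IsFiniteMeasure μ ∧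
        μ (Set.Icc 0 R)ᶜ = 0 ∧ ∃ s1 s2 : ℝ, 0 ≤ s1 ∧ 0 ≤ s2 ∧
        q.1 = (∫ ω, ω ∂μ) + s1 ∧ q.2.1 = (∫ ω, ω ^ 2 ∂μ) + s2 ∧
        q.2.2 = (μ Set.univ).toReal})
    (p : ℝ) (hmin : IsLeast (RevVals al be b c R γ1 γ2) p) :
    IsGreatest (RevSDPVals al be b c R γ1 γ2) p := by
  obtain ⟨l1, l2, l3, h1, h2, h3, h4⟩ := dual_exists (gRev al be b c) (gRev_continuous al be b c)
    R γ1 γ2 p hint (fun μ hμ h0 e1 e2 => hmin.2 ⟨μ, hμ, h0, e1, e2, rfl⟩)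
  have hmem := sdp_feasible al be b c R γ1 γ2 hR hal hbe hb l1 l2 l3 h1 h2 h3
  have hle := weak_duality al be b c R γ1 γ2 hmem hmin.1
  refine ⟨?_, fun d hd => weak_duality al be b c R γ1 γ2 hd hmin.1⟩
  rwa [le_antisymm hle h4] at hmem

end
end

section
/- Let a, b ≥ 0 and c ∈ ℝ, and define f on [0, ∞) by f(v) = a(v−b)² + c for 0 ≤ v ≤ b and f(v) = c for v > b. Then for every v ≥ 0, f(v) = min_{k=1,2} max_{ℓ=1,2} g_ℓ^k(v), where g_1^1(v) = g_2^1(v) = a(v−b)² + c, g_1^2(v) = −ab·v + ab² + c, and g_2^2(v) = c. In particular, f is the restriction to [0,∞) of a piecewise SOS-convex function. -/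
open MvPolynomial Matrix
open scoped BigOperators

noncomputable section

def IsSOS {m : ℕ} (p : MvPolynomial (Fin m) ℝ) : Prop :=
  ∃ (J : ℕ) (f : Fin J → MvPolynomial (Fin m) ℝ), p = ∑ j, (f j) ^ 2

def polyHessian {m : ℕ} (f : MvPolynomial (Fin m) ℝ) :
    Matrix (Fin m) (Fin m) (MvPolynomial (Fin m) ℝ) :=
  Matrix.of fun i j => pderiv i (pderiv j f)

def IsSOSConvex {m : ℕ} (f : MvPolynomial (Fin m) ℝ) : Prop :=
  ∃ (s : ℕ) (P : Matrix (Fin s) (Fin m) (MvPolynomial (Fin m) ℝ)),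
    polyHessian f = Pᵀ * P

/-- The SOS-convex pieces of the piecewise quadratic function:
`g_1^1 = g_2^1 = a(v−b)² + c`, `g_1^2 = −ab·v + ab² + c`, `g_2^2 = c`. -/
def pqPieces (a b c : ℝ) (k ℓ : Fin 2) : MvPolynomial (Fin 1) ℝ :=
  if k = 0 then C a * (X 0 - C b) ^ 2 + C c
  else if ℓ = 0 then -(C (a * b)) * X 0 + C (a * b ^ 2) + C c
  else C c

/-- The piecewise quadratic function
`f(v) = a(v−b)² + c` on `[0, b]`, `= c` for `v > b`, is on `[0, ∞)` the
pointwise `min_{k=1,2} max_{ℓ=1,2}` of the SOS-convex polynomials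
`g_1^1 = g_2^1 = a(v−b)² + c`, `g_1^2 = −ab·v + ab² + c`, `g_2^2 = c`; in
particular it is the restriction to `[0, ∞)` of a piecewise SOS-convex
function. -/
theorem piecewise_quadratic_sosConvex (a b c : ℝ) (ha : 0 ≤ a) (hb : 0 ≤ b) :
    (∀ k ℓ, IsSOSConvex (pqPieces a b c k ℓ)) ∧
    ∀ v : ℝ, 0 ≤ v →
      (if v ≤ b then a * (v - b) ^ 2 + c else c) =
        min (max (eval (fun _ => v) (pqPieces a b c 0 0))
                 (eval (fun _ => v) (pqPieces a b c 0 1)))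
            (max (eval (fun _ => v) (pqPieces a b c 1 0))
                 (eval (fun _ => v) (pqPieces a b c 1 1))) := by
  constructor
  · intro k l
    have h2 : (C (Real.sqrt (2 * a)) * C (Real.sqrt (2 * a)) : MvPolynomial (Fin 1) ℝ)
        = 2 * C a := by
      rw [← C_mul, Real.mul_self_sqrt (by positivity), C_mul]
      rfl
    by_cases hk : k = 0
    · refine ⟨1, Matrix.of fun _ _ => C (Real.sqrt (2 * a)), ?_⟩
      ext1 i j
      fin_cases i
      fin_cases j
      have h0 : pderiv (0 : Fin 1) (2 : MvPolynomial (Fin 1) ℝ) = 0 :=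
        pderiv_C (a := (2 : ℝ))
      generalize Real.sqrt (2 * a) = r at h2 ⊢
      simp [polyHessian, pqPieces, hk, Matrix.mul_apply, h2, h0, Derivation.leibniz]
      ring
    · refine ⟨0, 0, ?_⟩
      ext1 i j
      fin_cases i
      fin_cases j
      by_cases hl : l = 0 <;>
      simp [polyHessian, pqPieces, hk, hl, Matrix.mul_apply, Derivation.leibniz, -C_mul]
  · intro v hv
    simp only [pqPieces]
    simp
    split_ifs with h
    · have h1 : 0 ≤ a * (b - v) := mul_nonneg ha (by linarith)
      have h3 : 0 ≤ a * (b - v) * v := mul_nonneg h1 hv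
      have h4 : 0 ≤ a * (b - v) * b := mul_nonneg h1 hb
      rw [max_eq_left (by nlinarith), min_eq_left (by nlinarith)]
    · have h1 : 0 ≤ a * (v - b) * b := mul_nonneg (mul_nonneg ha (by linarith)) hb
      have h3 : 0 ≤ a * (v - b) ^ 2 := by positivity
      rw [max_eq_right (by nlinarith), min_eq_right (by linarith)]

end
end

section
/- Let α, β, b ≥ 0 and c ∈ ℝ, and define f on [0, ∞) by f(v) = α(v−b)² + β(v−b)⁴ + c for 0 ≤ v ≤ b and f(v) = c for v > b. Then for every v ≥ 0, f(v) = min_{k=1,2} max_{ℓ=1,2} g_ℓ^k(v), where g_1^1(v) = g_2^1(v) = α(v−b)² + β(v−b)⁴ + c, g_1^2(v) = −(αb + βb³)v + (αb² + βb⁴ + c), and g_2^2(v) = c. In particular, f is the restriction to [0,∞) of a piecewise SOS-convex function. -/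
open MvPolynomial Matrix
open scoped BigOperators

noncomputable section

/-- The SOS-convex pieces of the piecewise quadratic-quartic function:
`g_1^1 = g_2^1 = α(v−b)² + β(v−b)⁴ + c`,
`g_1^2 = −(αb + βb³)v + (αb² + βb⁴ + c)`, `g_2^2 = c`. -/
def pqqPieces (α β b c : ℝ) (k ℓ : Fin 2) : MvPolynomial (Fin 1) ℝ :=
  if k = 0 then C α * (X 0 - C b) ^ 2 + C β * (X 0 - C b) ^ 4 + C c
  else if ℓ = 0 then
    -(C (α * b + β * b ^ 3)) * X 0 + C (α * b ^ 2 + β * b ^ 4 + c)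
  else C c

/-- The piecewise quadratic-quartic function
`f(v) = α(v−b)² + β(v−b)⁴ + c` on `[0, b]`, `= c` for `v > b`, is on `[0, ∞)`
the pointwise `min_{k=1,2} max_{ℓ=1,2}` of the SOS-convex polynomials
`g_1^1 = g_2^1 = α(v−b)² + β(v−b)⁴ + c`,
`g_1^2 = −(αb + βb³)v + (αb² + βb⁴ + c)`, `g_2^2 = c`; in particular it is the
restriction to `[0, ∞)` of a piecewise SOS-convex function. -/
theorem piecewise_quadratic_quartic_sosConvex (α β b c : ℝ)
    (hα : 0 ≤ α) (hβ : 0 ≤ β) (hb : 0 ≤ b) :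
    (∀ k ℓ, IsSOSConvex (pqqPieces α β b c k ℓ)) ∧
    ∀ v : ℝ, 0 ≤ v →
      (if v ≤ b then α * (v - b) ^ 2 + β * (v - b) ^ 4 + c else c) =
        min (max (eval (fun _ => v) (pqqPieces α β b c 0 0))
                 (eval (fun _ => v) (pqqPieces α β b c 0 1)))
            (max (eval (fun _ => v) (pqqPieces α β b c 1 0))
                 (eval (fun _ => v) (pqqPieces α β b c 1 1))) := by
  constructor
  · intro k ℓ
    unfold pqqPieces
    split_ifs
    · refine ⟨2, Matrix.of fun i _ => if i = 0 then C (√(2 * α)) else C (√(12 * β)) * (X 0 - C b), ?_⟩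
      have h1 : (C (√(2 * α)) : MvPolynomial (Fin 1) ℝ) * C (√(2 * α)) = 2 * C α := by
        rw [← C_mul, Real.mul_self_sqrt (by positivity), C_mul]; rfl
      have h2 : (C (√(12 * β)) : MvPolynomial (Fin 1) ℝ) * C (√(12 * β)) = 12 * C β := by
        rw [← C_mul, Real.mul_self_sqrt (by positivity), C_mul]; rfl
      ext1 i j
      fin_cases i; fin_cases j
      simp only [polyHessian, Matrix.of_apply, Matrix.mul_apply, Matrix.transpose_apply,
        Fin.sum_univ_two]
      generalize √(2 * α) = s at *
      generalize √(12 * β) = t at *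
      have h3 : (4 : MvPolynomial (Fin 1) ℝ) = C 4 := rfl
      have h4 : (2 : MvPolynomial (Fin 1) ℝ) = C 2 := rfl
      have h5 : (3 : MvPolynomial (Fin 1) ℝ) = C 3 := rfl
      have d4 : pderiv (0 : Fin 1) (4 : MvPolynomial (Fin 1) ℝ) = 0 := by rw [h3, pderiv_C]
      have d2 : pderiv (0 : Fin 1) (2 : MvPolynomial (Fin 1) ℝ) = 0 := by rw [h4, pderiv_C]
      simp [pderiv_mul, pderiv_pow, pderiv_C, d4, d2]
      linear_combination (-1) * h1 - (X 0 - C b) ^ 2 * h2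
    all_goals
      refine ⟨0, 0, ?_⟩
      ext1 i j
      fin_cases i; fin_cases j
      simp [polyHessian]
  · intro v hv
    simp only [pqqPieces]
    simp
    have hq : 0 ≤ α * (v - b) ^ 2 + β * (v - b) ^ 4 := by positivity
    split_ifs with h
    · rw [eq_comm]
      apply min_eq_left
      apply le_max_of_le_left
      have hd : 0 ≤ b - v := by linarith
      have e1 : (b - v) ^ 1 ≤ b ^ 1 := by simpa using hv
      have e3 : (b - v) ^ 3 ≤ b ^ 3 := pow_le_pow_left₀ hd (by linarith) 3
      have a1 := mul_nonneg (mul_nonneg hα hd) (sub_nonneg.2 e1)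
      have a3 := mul_nonneg (mul_nonneg hβ hd) (sub_nonneg.2 e3)
      linarith
    · have hd : 0 ≤ v - b := by linarith
      have a : 0 ≤ (α * b + β * b ^ 3) * (v - b) := by positivity
      rw [max_eq_right (b := c) (by linarith), min_eq_right (by linarith)]

end
end

section
/- For every ε > 0 and every v ∈ ℝ, the Huber loss H_ε(v), defined by H_ε(v) = ½v² if |v| ≤ ε and H_ε(v) = ε|v| − ½ε² otherwise, satisfies H_ε(v) = min_{k=1,2} max_{ℓ=1,2,3,4} g_ℓ^k(v), where g_ℓ^1(v) = ½v² for ℓ=1,…,4, g_1^2(v) = εv − ½ε², g_2^2(v) = −εv − ½ε², g_3^2(v) = ½εv, and g_4^2(v) = −½εv. In particular, the Huber loss is a piecewise SOS-convex function. -/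
open MvPolynomial Matrix
open scoped BigOperators

noncomputable section

/-- The SOS-convex pieces of the Huber loss:
`g_ℓ^1 = ½v²` for `ℓ = 1,…,4`, `g_1^2 = εv − ½ε²`, `g_2^2 = −εv − ½ε²`,
`g_3^2 = ½εv`, `g_4^2 = −½εv`. -/
def huberPieces (ε : ℝ) (k : Fin 2) (ℓ : Fin 4) : MvPolynomial (Fin 1) ℝ :=
  if k = 0 then C (1 / 2 : ℝ) * X 0 ^ 2
  else if ℓ = 0 then C ε * X 0 - C (ε ^ 2 / 2)
  else if ℓ = 1 then -(C ε * X 0) - C (ε ^ 2 / 2)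
  else if ℓ = 2 then C (ε / 2) * X 0
  else -(C (ε / 2) * X 0)

theorem sup_fin_four (f : Fin 4 → ℝ) :
    Finset.univ.sup' Finset.univ_nonempty f = max (f 0) (max (f 1) (max (f 2) (f 3))) := by
  apply le_antisymm
  · apply Finset.sup'_le
    intro b _
    fin_cases b <;> simp
  · simp only [max_le_iff]
    exact ⟨Finset.le_sup' f (Finset.mem_univ _), Finset.le_sup' f (Finset.mem_univ _),
      Finset.le_sup' f (Finset.mem_univ _), Finset.le_sup' f (Finset.mem_univ _)⟩

theorem sosConvex_of_zero (f : MvPolynomial (Fin 1) ℝ) (h : pderiv 0 (pderiv 0 f) = 0) :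
    IsSOSConvex f := by
  refine ⟨0, 0, ?_⟩
  ext1 i j
  fin_cases i
  fin_cases j
  simp [polyHessian, h]

theorem sosConvex_of_one (f : MvPolynomial (Fin 1) ℝ) (h : pderiv 0 (pderiv 0 f) = 1) :
    IsSOSConvex f := by
  refine ⟨1, 1, ?_⟩
  ext1 i j
  fin_cases i
  fin_cases j
  simp [polyHessian, h]

/-- The Huber loss `H_ε` is the pointwise
`min_{k=1,2} max_{ℓ=1,…,4}` of the SOS-convex polynomials `g_ℓ^1 = ½v²`,
`g_1^2 = εv − ½ε²`, `g_2^2 = −εv − ½ε²`, `g_3^2 = ½εv`, `g_4^2 = −½εv`; in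
particular the Huber loss is a piecewise SOS-convex function. -/
theorem huber_piecewise_sosConvex (ε : ℝ) (hε : 0 < ε) :
    (∀ k ℓ, IsSOSConvex (huberPieces ε k ℓ)) ∧
    ∀ v : ℝ,
      (if |v| ≤ ε then v ^ 2 / 2 else ε * |v| - ε ^ 2 / 2) =
        min (Finset.univ.sup' Finset.univ_nonempty fun ℓ : Fin 4 =>
              eval (fun _ => v) (huberPieces ε 0 ℓ))
            (Finset.univ.sup' Finset.univ_nonempty fun ℓ : Fin 4 =>
              eval (fun _ => v) (huberPieces ε 1 ℓ)) := by
  constructor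
  · intro k ℓ
    fin_cases k
    · apply sosConvex_of_one
      have hC : (2 : MvPolynomial (Fin 1) ℝ) = C 2 := (map_ofNat C 2).symm
      have hd : pderiv (0 : Fin 1) (2 : MvPolynomial (Fin 1) ℝ) = 0 := by
        rw [hC, pderiv_C]
      have h2 : (C (1 / 2 : ℝ) : MvPolynomial (Fin 1) ℝ) * 2 = 1 := by
        rw [hC, ← C_mul]
        norm_num
      simp only [huberPieces]
      simp [Derivation.leibniz_pow, -one_div, hd]
      exact h2
    · apply sosConvex_of_zero
      fin_cases ℓ <;> simp [huberPieces]
  · intro v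
    rw [sup_fin_four, sup_fin_four]
    simp only [huberPieces]
    simp
    split_ifs with h
    · rw [min_eq_left]
      · ring
      · rcases le_total 0 v with hv | hv
        · rw [abs_of_nonneg hv] at h
          apply le_max_of_le_right
          apply le_max_of_le_right
          apply le_max_of_le_left
          nlinarith
        · rw [abs_of_nonpos hv] at h
          apply le_max_of_le_right
          apply le_max_of_le_right
          apply le_max_of_le_right
          nlinarith
    · rw [not_le] at h
      rcases le_total 0 v with hv | hv
      · rw [abs_of_nonneg hv] at h ⊢
        rw [max_eq_left, min_eq_right]
        · nlinarith [sq_nonneg (v - ε)]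
        · simp only [max_le_iff]
          refine ⟨?_, ?_, ?_⟩ <;> nlinarith
      · rw [abs_of_nonpos hv] at h ⊢
        have h1 : max (-(ε * v) - ε ^ 2 / 2) (max (ε / 2 * v) (-(ε / 2 * v)))
            = -(ε * v) - ε ^ 2 / 2 := by
          apply max_eq_left
          simp only [max_le_iff]
          refine ⟨?_, ?_⟩ <;> nlinarith
        rw [h1, max_eq_right, min_eq_right]
        · ring
        · nlinarith [sq_nonneg (v + ε)]
        · nlinarith

end
end
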